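/- Let μ be a Borel probability measure on SL₂(ℝ) with a finite exponential moment whose support generates a Zariski dense subgroup. There exist constants C > 0 and ε' > 0 such that for all s > 0, a > 0, t > max{10s, 10}, and all x, x', x_o ∈ X, Σ_{n≥0} μ^{*n}{ g : d(g⁻¹ x_o, x') ≤ e^{−s} and σ(g,x) − t ∈ [0, a] } ≤ C (1 + a)² e^{−ε' s}. -/

import Mathlib

open MeasureTheory Filter

noncomputable section

abbrev SL2 := Matrix.SpecialLinearGroup (Fin 2) ℝ

abbrev PX := Projectivization ℝ (Fin 2 → ℝ)

instance : TopologicalSpace SL2 := instTopologicalSpaceSubtype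
instance : TopologicalSpace PX := instTopologicalSpaceQuotient
instance : MeasurableSpace SL2 := borel _
instance : MeasurableSpace PX := borel _

/-- Euclidean norm on ℝ². -/
def enorm2 (v : Fin 2 → ℝ) : ℝ := Real.sqrt (v 0 ^ 2 + v 1 ^ 2)

/-- Operator norm of g ∈ SL₂(ℝ) w.r.t. the Euclidean norm on ℝ². -/
def opNorm (g : SL2) : ℝ :=
  ‖Matrix.toEuclideanCLM (𝕜 := ℝ) (n := Fin 2) (g : Matrix (Fin 2) (Fin 2) ℝ)‖

/-- Cartan projection κ(g) = log ‖g‖. -/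
def kappa (g : SL2) : ℝ := Real.log (opNorm g)

/-- The projective action of SL₂(ℝ) on ℙ(ℝ²). -/
def act (g : SL2) (x : PX) : PX :=
  Projectivization.map ((Matrix.SpecialLinearGroup.toLin' g).toLinearMap)
    (LinearEquiv.injective _) x

/-- The norm cocycle σ(g, ℝv) = log (‖gv‖/‖v‖). -/
def cocycle (g : SL2) (x : PX) : ℝ :=
  Real.log (enorm2 ((g : Matrix (Fin 2) (Fin 2) ℝ).mulVec x.rep) / enorm2 x.rep)

/-- The sine distance d(ℝv, ℝw) = |det(v,w)|/(‖v‖‖w‖) on ℙ(ℝ²). -/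
def projDist (x y : PX) : ℝ :=
  |x.rep 0 * y.rep 1 - x.rep 1 * y.rep 0| / (enorm2 x.rep * enorm2 y.rep)

/-- An angle θ(x) ∈ ℝ representing x = ℝ(cos θ, sin θ). -/
def pangle (x : PX) : ℝ := Complex.arg (x.rep 0 + x.rep 1 * Complex.I)

/-- The (topological) support of a measure. -/
def measSupp (μ : Measure SL2) : Set SL2 :=
  {g | ∀ U : Set SL2, IsOpen U → g ∈ U → 0 < μ U}

/-- μ has a finite exponential moment. -/
def HasExpMoment (μ : Measure SL2) : Prop :=
  ∃ ε₁ > (0 : ℝ), ∫⁻ g, ENNReal.ofReal (opNorm g ^ ε₁) ∂μ < ⊤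

/-- The group generated by the support of μ is Zariski dense in SL₂(ℝ),
equivalently it is not solvable. -/
def ZariskiDense (μ : Measure SL2) : Prop :=
  ¬ IsSolvable (Subgroup.closure (measSupp μ))

/-- ν is μ-stationary: μ ∗ ν = ν. -/
def IsStationaryMeas (μ : Measure SL2) (ν : Measure PX) : Prop :=
  μ.bind (fun g => ν.map (act g)) = ν

/-- The product g₁ ⋯ gₙ of a word (g₁, …, gₙ). -/
def word {n : ℕ} (g : Fin n → SL2) : SL2 := (List.ofFn g).prod

/-- The product measure μ^{⊗n} on words of length n. -/
def μpi (μ : Measure SL2) (n : ℕ) : Measure (Fin n → SL2) := Measure.pi fun _ => μ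

/-! ### Elementary linear algebra -/

/-- matrix acting on vectors -/
def mv (g : SL2) (v : Fin 2 → ℝ) : Fin 2 → ℝ := (g : Matrix (Fin 2) (Fin 2) ℝ).mulVec v

/-- determinant of two vectors -/
def dt (v w : Fin 2 → ℝ) : ℝ := v 0 * w 1 - v 1 * w 0

/-- Frobenius norm -/
def nf (g : SL2) : ℝ := Real.sqrt (g 0 0 ^ 2 + g 0 1 ^ 2 + g 1 0 ^ 2 + g 1 1 ^ 2)

lemma mv_zero' (g : SL2) (v : Fin 2 → ℝ) : mv g v 0 = g 0 0 * v 0 + g 0 1 * v 1 := by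
  simp [mv, Matrix.mulVec, dotProduct, Fin.sum_univ_two]

lemma mv_one' (g : SL2) (v : Fin 2 → ℝ) : mv g v 1 = g 1 0 * v 0 + g 1 1 * v 1 := by
  simp [mv, Matrix.mulVec, dotProduct, Fin.sum_univ_two]

lemma sl_det (g : SL2) : g 0 0 * g 1 1 - g 0 1 * g 1 0 = 1 := by
  have := g.det_coe
  rwa [Matrix.det_fin_two] at this

lemma mv_mul (g h : SL2) (v : Fin 2 → ℝ) : mv (g * h) v = mv g (mv h v) := by
  simp only [mv, Matrix.SpecialLinearGroup.coe_mul, Matrix.mulVec_mulVec]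

lemma mv_id (v : Fin 2 → ℝ) : mv 1 v = v := by simp [mv]

lemma mv_smul (g : SL2) (c : ℝ) (v : Fin 2 → ℝ) : mv g (c • v) = c • mv g v := by
  simp [mv, Matrix.mulVec_smul]

lemma mv_inv_mv (g : SL2) (v : Fin 2 → ℝ) : mv g⁻¹ (mv g v) = v := by
  rw [← mv_mul, inv_mul_cancel, mv_id]

lemma mv_mv_inv (g : SL2) (v : Fin 2 → ℝ) : mv g (mv g⁻¹ v) = v := by
  rw [← mv_mul, mul_inv_cancel, mv_id]

lemma mv_ne_zero (g : SL2) {v : Fin 2 → ℝ} (hv : v ≠ 0) : mv g v ≠ 0 := by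
  intro h
  apply hv
  have := mv_inv_mv g v
  rw [h] at this
  rw [← this]; simp [mv]

lemma inv_00 (g : SL2) : (g⁻¹) 0 0 = g 1 1 := by
  simp [Matrix.SpecialLinearGroup.SL2_inv_expl]
lemma inv_01 (g : SL2) : (g⁻¹) 0 1 = - g 0 1 := by
  simp [Matrix.SpecialLinearGroup.SL2_inv_expl]
lemma inv_10 (g : SL2) : (g⁻¹) 1 0 = - g 1 0 := by
  simp [Matrix.SpecialLinearGroup.SL2_inv_expl]
lemma inv_11 (g : SL2) : (g⁻¹) 1 1 = g 0 0 := by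
  simp [Matrix.SpecialLinearGroup.SL2_inv_expl]

lemma dt_mv (g : SL2) (v w : Fin 2 → ℝ) : dt (mv g v) (mv g w) = dt v w := by
  have := sl_det g
  simp only [dt, mv_zero', mv_one']
  linear_combination (v 0 * w 1 - v 1 * w 0) * this

lemma dt_inv (g : SL2) (v w : Fin 2 → ℝ) : dt (mv g⁻¹ v) w = dt v (mv g w) := by
  rw [← dt_mv g, mv_mv_inv]

lemma dt_swap (v w : Fin 2 → ℝ) : dt v w = - dt w v := by simp only [dt]; ring

lemma dt_smul_left (c : ℝ) (v w : Fin 2 → ℝ) : dt (c • v) w = c * dt v w := by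
  simp only [dt, Pi.smul_apply, smul_eq_mul]; ring

lemma dt_smul_right (c : ℝ) (v w : Fin 2 → ℝ) : dt v (c • w) = c * dt v w := by
  simp only [dt, Pi.smul_apply, smul_eq_mul]; ring

lemma enorm2_nonneg (v : Fin 2 → ℝ) : 0 ≤ enorm2 v := Real.sqrt_nonneg _

lemma enorm2_sq (v : Fin 2 → ℝ) : enorm2 v ^ 2 = v 0 ^ 2 + v 1 ^ 2 :=
  Real.sq_sqrt (by positivity)

lemma enorm2_pos {v : Fin 2 → ℝ} (hv : v ≠ 0) : 0 < enorm2 v := by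
  apply Real.sqrt_pos.2
  by_contra h
  apply hv
  have h0 : v 0 = 0 := by nlinarith [sq_nonneg (v 0), sq_nonneg (v 1)]
  have h1 : v 1 = 0 := by nlinarith [sq_nonneg (v 0), sq_nonneg (v 1)]
  ext i; fin_cases i <;> simp [h0, h1]

lemma ne_zero_of_unit {v : Fin 2 → ℝ} (hv : enorm2 v = 1) : v ≠ 0 := by
  rintro rfl; simp [enorm2] at hv

lemma enorm2_smul (c : ℝ) (v : Fin 2 → ℝ) : enorm2 (c • v) = |c| * enorm2 v := by
  rw [enorm2, enorm2, ← Real.sqrt_sq_eq_abs, ← Real.sqrt_mul (sq_nonneg c)]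
  simp only [Pi.smul_apply, smul_eq_mul]; congr 1; ring

lemma nf_nonneg (g : SL2) : 0 ≤ nf g := Real.sqrt_nonneg _
lemma nf_sq (g : SL2) : nf g ^ 2 = g 0 0 ^ 2 + g 0 1 ^ 2 + g 1 0 ^ 2 + g 1 1 ^ 2 :=
  Real.sq_sqrt (by positivity)

lemma one_le_nf (g : SL2) : 1 ≤ nf g := by
  have h := sl_det g
  have := nf_sq g
  have h2 := nf_nonneg g
  nlinarith [sq_nonneg (g 0 0 - g 1 1), sq_nonneg (g 0 1 + g 1 0)]

lemma nf_pos (g : SL2) : 0 < nf g := lt_of_lt_of_le one_pos (one_le_nf g)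

lemma nf_inv (g : SL2) : nf g⁻¹ = nf g := by
  rw [nf, nf, inv_00, inv_01, inv_10, inv_11]; congr 1; ring

lemma enorm2_mv_le (g : SL2) (v : Fin 2 → ℝ) : enorm2 (mv g v) ≤ nf g * enorm2 v := by
  apply abs_le_of_sq_le_sq' _ (mul_nonneg (nf_nonneg g) (enorm2_nonneg v)) |>.2
  rw [mul_pow, enorm2_sq, enorm2_sq, nf_sq, mv_zero', mv_one']
  nlinarith [sq_nonneg (g 0 0 * v 1 - g 0 1 * v 0), sq_nonneg (g 1 0 * v 1 - g 1 1 * v 0)]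

lemma enorm2_le_mv (g : SL2) (v : Fin 2 → ℝ) : enorm2 v ≤ nf g * enorm2 (mv g v) := by
  have := enorm2_mv_le g⁻¹ (mv g v)
  rwa [mv_inv_mv, nf_inv] at this

lemma nf_mul_le (g h : SL2) : nf (g * h) ≤ nf g * nf h := by
  apply abs_le_of_sq_le_sq' _ (mul_nonneg (nf_nonneg g) (nf_nonneg h)) |>.2
  rw [mul_pow, nf_sq, nf_sq, nf_sq]
  simp only [Matrix.SpecialLinearGroup.coe_mul, Matrix.mul_apply, Fin.sum_univ_two]
  nlinarith [sq_nonneg (g 0 0 * h 1 0 - g 0 1 * h 0 0), sq_nonneg (g 0 0 * h 1 1 - g 0 1 * h 0 1),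
    sq_nonneg (g 1 0 * h 1 0 - g 1 1 * h 0 0), sq_nonneg (g 1 0 * h 1 1 - g 1 1 * h 0 1)]

lemma abs_dt_le (v w : Fin 2 → ℝ) : |dt v w| ≤ enorm2 v * enorm2 w := by
  apply abs_le_of_sq_le_sq _ (mul_nonneg (enorm2_nonneg v) (enorm2_nonneg w))
  rw [mul_pow, enorm2_sq, enorm2_sq, dt]
  nlinarith [sq_nonneg (v 0 * w 0 + v 1 * w 1)]

lemma abs_dp_le (v w : Fin 2 → ℝ) : |v 0 * w 0 + v 1 * w 1| ≤ enorm2 v * enorm2 w := by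
  apply abs_le_of_sq_le_sq _ (mul_nonneg (enorm2_nonneg v) (enorm2_nonneg w))
  rw [mul_pow, enorm2_sq, enorm2_sq]
  nlinarith [sq_nonneg (v 0 * w 1 - v 1 * w 0)]

lemma dt_triangle (a b c : Fin 2 → ℝ) (ha : enorm2 a = 1) (hb : enorm2 b = 1)
    (hc : enorm2 c = 1) : |dt a c| ≤ |dt a b| + |dt b c| := by
  have hb2 := enorm2_sq b
  rw [hb] at hb2
  have h1 := abs_dp_le b c
  have h2 := abs_dp_le a b
  rw [hb, hc, one_mul] at h1
  rw [ha, hb, one_mul] at h2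
  have : dt a c = dt a b * (b 0 * c 0 + b 1 * c 1) + (a 0 * b 0 + a 1 * b 1) * dt b c := by
    simp only [dt]
    linear_combination (a 0 * c 1 - a 1 * c 0) * hb2
  rw [this]
  refine (abs_add_le _ _).trans ?_
  rw [abs_mul, abs_mul]
  have := abs_nonneg (dt a b)
  have := abs_nonneg (dt b c)
  nlinarith

lemma enorm2_add_le (v w : Fin 2 → ℝ) : enorm2 (v + w) ≤ enorm2 v + enorm2 w := by
  apply abs_le_of_sq_le_sq' _ (add_nonneg (enorm2_nonneg v) (enorm2_nonneg w)) |>.2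
  have h := (abs_le.1 (abs_dp_le v w)).2
  have : (enorm2 v + enorm2 w) ^ 2 = enorm2 v ^ 2 + enorm2 w ^ 2 + 2 * (enorm2 v * enorm2 w) := by
    ring
  rw [this, enorm2_sq, enorm2_sq, enorm2_sq]
  simp only [Pi.add_apply]
  nlinarith

lemma contract_ineq (h : SL2) (z w : Fin 2 → ℝ) (hw : w ≠ 0) :
    enorm2 (mv h⁻¹ z) * enorm2 (mv h w) ≤ enorm2 z * enorm2 w + |dt z (mv h w)| * nf h := by
  set u := mv h w with hu
  have hu0 : 0 < enorm2 u := enorm2_pos (mv_ne_zero h hw)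
  have hJ : enorm2 ![u 1, - u 0] = enorm2 u := by
    simp only [enorm2, Matrix.cons_val_zero, Matrix.cons_val_one]; congr 1; ring
  have key : (enorm2 u ^ 2) • z = (z 0 * u 0 + z 1 * u 1) • u + (dt z u) • ![u 1, - u 0] := by
    rw [enorm2_sq]
    ext i; fin_cases i
    · simp [dt]; ring
    · simp [dt]; ring
  have h2 : (enorm2 u ^ 2) • mv h⁻¹ z
      = (z 0 * u 0 + z 1 * u 1) • w + (dt z u) • mv h⁻¹ ![u 1, - u 0] := by
    rw [← mv_smul, key]
    have : mv h⁻¹ u = w := mv_inv_mv h w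
    simp only [mv, Matrix.mulVec_add, Matrix.mulVec_smul] at *
    rw [this]
  have h3 : enorm2 u ^ 2 * enorm2 (mv h⁻¹ z) ≤
      (enorm2 z * enorm2 u) * enorm2 w + |dt z u| * (nf h * enorm2 u) := by
    have : enorm2 ((enorm2 u ^ 2) • mv h⁻¹ z) = enorm2 u ^ 2 * enorm2 (mv h⁻¹ z) := by
      rw [enorm2_smul, abs_of_nonneg (sq_nonneg _)]
    rw [← this, h2]
    refine (enorm2_add_le _ _).trans ?_
    rw [enorm2_smul, enorm2_smul]
    gcongr
    · exact enorm2_nonneg _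
    · exact abs_dp_le z u
    · have := enorm2_mv_le h⁻¹ ![u 1, - u 0]
      rwa [nf_inv, hJ] at this
  have : enorm2 u * (enorm2 (mv h⁻¹ z) * enorm2 u) ≤ enorm2 u * (enorm2 z * enorm2 w + |dt z u| * nf h) := by
    linarith
  exact le_of_mul_le_mul_left this hu0

lemma exists_contracted (g : SL2) : ∃ w : Fin 2 → ℝ, enorm2 w = 1 ∧
    ∀ v, nf g / 2 * |dt v w| ≤ enorm2 (mv g v) := by
  have main : ∀ r : Fin 2 → ℝ, nf g ^ 2 ≤ 2 * enorm2 r ^ 2 →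
      (∀ v, |r 0 * v 0 + r 1 * v 1| ≤ enorm2 (mv g v)) →
      ∃ w : Fin 2 → ℝ, enorm2 w = 1 ∧ ∀ v, nf g / 2 * |dt v w| ≤ enorm2 (mv g v) := by
    intro r hr h
    have hn := nf_pos g
    have hr0 : 0 < enorm2 r := by
      rcases (enorm2_nonneg r).eq_or_lt with h0 | h0
      · rw [← h0] at hr; nlinarith
      · exact h0
    have hle : nf g / 2 ≤ enorm2 r := by nlinarith
    have hJ : enorm2 ![- r 1, r 0] = enorm2 r := by
      simp only [enorm2, Matrix.cons_val_zero, Matrix.cons_val_one]; congr 1; ring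
    refine ⟨(enorm2 r)⁻¹ • ![- r 1, r 0], ?_, fun v => ?_⟩
    · rw [enorm2_smul, abs_of_pos (inv_pos.2 hr0), hJ, inv_mul_cancel₀ hr0.ne']
    · refine le_trans ?_ (h v)
      rw [dt_smul_right, abs_mul, abs_of_pos (inv_pos.2 hr0)]
      have : dt v ![- r 1, r 0] = r 0 * v 0 + r 1 * v 1 := by simp [dt]; ring
      rw [this, ← mul_assoc]
      apply mul_le_of_le_one_left (abs_nonneg _)
      rw [← div_eq_mul_inv, div_le_one hr0]; exact hle
  by_cases hc : g 1 0 ^ 2 + g 1 1 ^ 2 ≤ g 0 0 ^ 2 + g 0 1 ^ 2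
  · refine main (g 0) ?_ fun v => ?_
    · rw [nf_sq, enorm2_sq]; linarith
    · rw [← mv_zero', ← Real.sqrt_sq_eq_abs, enorm2]
      apply Real.sqrt_le_sqrt; nlinarith [sq_nonneg (mv g v 1)]
  · refine main (g 1) ?_ fun v => ?_
    · rw [nf_sq, enorm2_sq]; linarith
    · rw [← mv_one', ← Real.sqrt_sq_eq_abs, enorm2]
      apply Real.sqrt_le_sqrt; nlinarith [sq_nonneg (mv g v 0)]

lemma nf_le_opNorm (g : SL2) : nf g ≤ 2 * opNorm g := by
  have key : ∀ v : EuclideanSpace ℝ (Fin 2), ‖Matrix.toEuclideanCLM (𝕜 := ℝ) (n := Fin 2) (g : Matrix (Fin 2) (Fin 2) ℝ) v‖ ≤ opNorm g * ‖v‖ :=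
    fun v => ContinuousLinearMap.le_opNorm _ v
  have ho : 0 ≤ opNorm g := norm_nonneg _
  have h0 := key (EuclideanSpace.single 0 1)
  have h1 := key (EuclideanSpace.single 1 1)
  simp [EuclideanSpace.norm_eq, Fin.sum_univ_two, Matrix.ofLp_toEuclideanCLM] at h0 h1
  rw [Real.sqrt_le_left ho] at h0 h1
  apply abs_le_of_sq_le_sq' _ (by positivity) |>.2
  rw [nf_sq]; nlinarith

/-! ### Topology and measurability -/

instance : BorelSpace SL2 := ⟨rfl⟩
instance : SecondCountableTopology SL2 :=
  @TopologicalSpace.secondCountableTopology_induced SL2 (Matrix (Fin 2) (Fin 2) ℝ) _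
    (inferInstanceAs (SecondCountableTopology (Fin 2 → Fin 2 → ℝ))) Subtype.val
instance : T2Space SL2 := inferInstanceAs (T2Space {A : Matrix (Fin 2) (Fin 2) ℝ // A.det = 1})
instance : IsTopologicalGroup SL2 := Matrix.SpecialLinearGroup.topologicalGroup

lemma cont_entry (i j : Fin 2) : Continuous fun g : SL2 => g i j :=
  (continuous_apply_apply i j).comp continuous_subtype_val
lemma cont_mv : Continuous fun p : SL2 × (Fin 2 → ℝ) => mv p.1 p.2 := by
  apply continuous_pi
  intro i
  have h := fun a b => (cont_entry a b).comp (continuous_fst : Continuous (Prod.fst : SL2 × (Fin 2 → ℝ) → SL2))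
  have h' : ∀ a : Fin 2, Continuous fun p : SL2 × (Fin 2 → ℝ) => p.2 a := fun a => by fun_prop
  fin_cases i
  · simp only [Fin.zero_eta, mv_zero']
    exact ((h 0 0).mul (h' 0)).add ((h 0 1).mul (h' 1))
  · simp only [Fin.mk_one, mv_one']
    exact ((h 1 0).mul (h' 0)).add ((h 1 1).mul (h' 1))

lemma cont_nf : Continuous nf := by
  have := cont_entry
  unfold nf
  exact Real.continuous_sqrt.comp (((((cont_entry 0 0).pow 2).add ((cont_entry 0 1).pow 2)).add
    ((cont_entry 1 0).pow 2)).add ((cont_entry 1 1).pow 2))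

lemma cont_enorm2 : Continuous enorm2 := by unfold enorm2; fun_prop
lemma cont_dt : Continuous fun p : (Fin 2 → ℝ) × (Fin 2 → ℝ) => dt p.1 p.2 := by
  unfold dt; fun_prop

lemma isCompact_nf_le (R : ℝ) : IsCompact {g : SL2 | nf g ≤ R} := by
  have hemb : Topology.IsClosedEmbedding (Subtype.val : SL2 → Matrix (Fin 2) (Fin 2) ℝ) := by
    apply Topology.IsClosedEmbedding.subtypeVal
    exact isClosed_eq (continuous_id.matrix_det) continuous_const
  have hK : IsCompact (Set.univ.pi fun _ : Fin 2 => Set.univ.pi fun _ : Fin 2 => Set.Icc (-R) R : Set (Fin 2 → Fin 2 → ℝ)) :=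
    isCompact_univ_pi fun _ => isCompact_univ_pi fun _ => isCompact_Icc
  refine (hemb.isCompact_preimage (K := (Set.univ.pi fun _ : Fin 2 => Set.univ.pi fun _ : Fin 2 => Set.Icc (-R) R : Set (Fin 2 → Fin 2 → ℝ))) hK).of_isClosed_subset
    (isClosed_le cont_nf continuous_const) ?_
  intro g hg i _ j _
  change SL2 at g
  have hg' : nf g ≤ R := hg
  have : |g i j| ≤ nf g := by
    rw [← Real.sqrt_sq_eq_abs, nf]
    apply Real.sqrt_le_sqrt
    fin_cases i <;> fin_cases j <;> simp <;> nlinarith [sq_nonneg (g 0 0), sq_nonneg (g 0 1), sq_nonneg (g 1 0), sq_nonneg (g 1 1)]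
  exact abs_le.1 (this.trans hg')


/-! ### Convolution powers -/

/-- convolution powers of a measure on the group -/
def M (μ : Measure SL2) : ℕ → Measure SL2
  | 0 => Measure.dirac 1
  | n + 1 => μ.mconv (M μ n)

instance M_prob (μ : Measure SL2) [IsProbabilityMeasure μ] (n : ℕ) : IsProbabilityMeasure (M μ n) := by
  induction n with
  | zero => rw [M]; infer_instance
  | succ n ih => rw [M]; infer_instance

lemma M_one (μ : Measure SL2) [IsProbabilityMeasure μ] : M μ 1 = μ := by
  rw [M, M, Measure.mconv_dirac_one]

lemma M_add (μ : Measure SL2) [IsProbabilityMeasure μ] (m n : ℕ) :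
    M μ (m + n) = (M μ m).mconv (M μ n) := by
  induction m with
  | zero => rw [M, Measure.dirac_one_mconv, Nat.zero_add]
  | succ m ih => rw [Nat.succ_add, M, ih, M, Measure.mconv_assoc]

lemma lint_add (μ : Measure SL2) [IsProbabilityMeasure μ] (m n : ℕ) {f : SL2 → ENNReal}
    (hf : Measurable f) :
    ∫⁻ g, f g ∂(M μ (m + n)) = ∫⁻ g, ∫⁻ h, f (g * h) ∂(M μ n) ∂(M μ m) := by
  rw [M_add, Measure.lintegral_mconv hf]

lemma measurable_word (n : ℕ) : Measurable (word : (Fin n → SL2) → SL2) := by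
  induction n with
  | zero => exact Measurable.of_discrete
  | succ n ih =>
    have : (word : (Fin (n+1) → SL2) → SL2) = fun g => g 0 * word (fun i : Fin n => g i.succ) := by
      ext1 g; simp [word, List.ofFn_succ]
    rw [this]
    exact (measurable_pi_apply 0).mul (ih.comp (measurable_pi_lambda _ fun i => measurable_pi_apply _))

lemma map_word (μ : Measure SL2) [IsProbabilityMeasure μ] (n : ℕ) :
    (μpi μ n).map word = M μ n := by
  induction n with
  | zero =>
    have : (word : (Fin 0 → SL2) → SL2) = fun _ => 1 := by ext1 g; simp [word]
    rw [this, M, Measure.map_const]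
    have : IsProbabilityMeasure (μpi μ 0) := by unfold μpi; infer_instance
    simp
  | succ n ih =>
    have hp := measurePreserving_piFinSuccAbove (fun _ : Fin (n+1) => μ) 0
    have : (word : (Fin (n+1) → SL2) → SL2) =
        (fun p : SL2 × SL2 => p.1 * p.2) ∘ (Prod.map id word) ∘
          (MeasurableEquiv.piFinSuccAbove (fun _ : Fin (n+1) => SL2) 0) := by
      ext1 g; simp [word, List.ofFn_succ, MeasurableEquiv.piFinSuccAbove, Fin.insertNthEquiv]
      try rfl
    rw [this, ← Measure.map_map (by fun_prop)
      ((measurable_id.prodMap (measurable_word n)).comp (MeasurableEquiv.measurable _)),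
      ← Measure.map_map (measurable_id.prodMap (measurable_word n)) (MeasurableEquiv.measurable _), M, Measure.mconv]
    congr 1
    have h2 := hp.map_eq
    unfold μpi
    rw [h2, ← ih, ← Measure.map_prod_map _ _ measurable_id (measurable_word n)]
    simp [μpi]

lemma M_map_inv (μ : Measure SL2) [IsProbabilityMeasure μ] (n : ℕ) :
    M (μ.map (·⁻¹)) n = (M μ n).map (·⁻¹) := by
  have : IsProbabilityMeasure (μ.map (·⁻¹)) := Measure.isProbabilityMeasure_map measurable_inv.aemeasurable
  induction n with
  | zero => rw [M, M, Measure.map_dirac' measurable_inv, inv_one]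
  | succ n ih =>
    rw [M, ih, M_add, M_one]
    rw [Measure.mconv, Measure.mconv, Measure.map_prod_map _ _ measurable_inv measurable_inv,
      Measure.map_map (by fun_prop) (by fun_prop), Measure.map_map (by fun_prop) (by fun_prop),
      ← Measure.prod_swap, Measure.map_map (by fun_prop) (by fun_prop)]
    congr 1
    ext1 p
    simp

/-! ### Moments -/

/-- exponential moment with Frobenius norms -/
def Mom (μ : Measure SL2) (ε A : ℝ) : Prop :=
  0 < ε ∧ 1 ≤ A ∧ ∀ n, ∫⁻ g, ENNReal.ofReal (nf g ^ ε) ∂(M μ n) ≤ ENNReal.ofReal (A ^ (n + 1))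

lemma meas_nf_rpow (ε : ℝ) : Measurable fun g : SL2 => ENNReal.ofReal (nf g ^ ε) :=
  ENNReal.measurable_ofReal.comp (cont_nf.measurable.pow_const ε)

lemma exists_Mom (μ : Measure SL2) [IsProbabilityMeasure μ] (h : HasExpMoment μ) :
    ∃ ε A, Mom μ ε A := by
  obtain ⟨ε, hε, hi⟩ := h
  have h1 : ∫⁻ g, ENNReal.ofReal (nf g ^ ε) ∂μ < ⊤ := by
    calc ∫⁻ g, ENNReal.ofReal (nf g ^ ε) ∂μ
        ≤ ∫⁻ g, ENNReal.ofReal (2 ^ ε) * ENNReal.ofReal (opNorm g ^ ε) ∂μ := by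
          apply lintegral_mono
          intro g
          beta_reduce
          rw [← ENNReal.ofReal_mul (by positivity), ← Real.mul_rpow (by norm_num) (show 0 ≤ opNorm g from norm_nonneg _)]
          exact ENNReal.ofReal_le_ofReal (Real.rpow_le_rpow (nf_nonneg g) (nf_le_opNorm g) hε.le)
      _ = ENNReal.ofReal (2 ^ ε) * ∫⁻ g, ENNReal.ofReal (opNorm g ^ ε) ∂μ := by
          rw [lintegral_const_mul' _ _ ENNReal.ofReal_ne_top]
      _ < ⊤ := ENNReal.mul_lt_top ENNReal.ofReal_lt_top hi
  set a := (∫⁻ g, ENNReal.ofReal (nf g ^ ε) ∂μ).toReal with ha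
  refine ⟨ε, max a (2 ^ ε), hε, le_max_of_le_right (Real.one_le_rpow (by norm_num) hε.le), fun n => ?_⟩
  have hb : ∫⁻ g, ENNReal.ofReal (nf g ^ ε) ∂μ ≤ ENNReal.ofReal (max a (2 ^ ε)) := by
    rw [← ENNReal.ofReal_toReal h1.ne]
    exact ENNReal.ofReal_le_ofReal (le_max_left _ _)
  induction n with
  | zero =>
    rw [M, lintegral_dirac' _ (meas_nf_rpow ε)]
    apply ENNReal.ofReal_le_ofReal
    rw [zero_add, pow_one]
    refine le_trans ?_ (le_max_right _ _)
    apply Real.rpow_le_rpow (nf_nonneg 1) _ hε.le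
    apply abs_le_of_sq_le_sq' _ (by norm_num) |>.2
    rw [nf_sq]; norm_num
  | succ n ih =>
    rw [add_comm n 1, lint_add _ _ _ (meas_nf_rpow ε), M_one]
    calc _ ≤ ∫⁻ g, ENNReal.ofReal (nf g ^ ε) * ENNReal.ofReal (max a (2 ^ ε) ^ (n + 1)) ∂μ := by
          apply lintegral_mono
          intro g
          refine le_trans ?_ (mul_le_mul_right ih _)
          rw [← lintegral_const_mul' _ _ ENNReal.ofReal_ne_top]
          apply lintegral_mono
          intro h
          beta_reduce
          rw [← ENNReal.ofReal_mul (Real.rpow_nonneg (nf_nonneg g) _), ← Real.mul_rpow (nf_nonneg g) (nf_nonneg h)]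
          exact ENNReal.ofReal_le_ofReal (Real.rpow_le_rpow (nf_nonneg _) (nf_mul_le g h) hε.le)
      _ = (∫⁻ g, ENNReal.ofReal (nf g ^ ε) ∂μ) * ENNReal.ofReal (max a (2 ^ ε) ^ (n + 1)) := by
          rw [lintegral_mul_const' _ _ ENNReal.ofReal_ne_top]
      _ ≤ ENNReal.ofReal (max a (2 ^ ε)) * ENNReal.ofReal (max a (2 ^ ε) ^ (n + 1)) := by gcongr
      _ = _ := by rw [← ENNReal.ofReal_mul (by positivity), add_comm 1 n, pow_succ _ (n + 1), mul_comm]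


/-! ### Solvability criteria -/

lemma par_of_dt {a v : Fin 2 → ℝ} (hv : v ≠ 0) (h : dt a v = 0) : ∃ c : ℝ, a = c • v := by
  have h0 := enorm2_pos hv
  have h2 := enorm2_sq v
  have hne : v 0 ^ 2 + v 1 ^ 2 ≠ 0 := by rw [← h2]; positivity
  unfold dt at h
  refine ⟨(a 0 * v 0 + a 1 * v 1) / (v 0 ^ 2 + v 1 ^ 2), ?_⟩
  ext i; fin_cases i
  · simp; field_simp; linear_combination v 1 * h
  · simp; field_simp; linear_combination - v 0 * h

lemma ext_basis {v w : Fin 2 → ℝ} (h : dt v w ≠ 0) {a b : SL2} (h1 : mv a v = mv b v)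
    (h2 : mv a w = mv b w) : a = b := by
  have e1 := congrFun h1 0
  have e2 := congrFun h1 1
  have e3 := congrFun h2 0
  have e4 := congrFun h2 1
  simp only [mv_zero', mv_one'] at e1 e2 e3 e4
  unfold dt at h
  have k1 : (v 0 * w 1 - v 1 * w 0) * (a 0 0 - b 0 0) = 0 := by
    linear_combination w 1 * e1 - v 1 * e3
  have k2 : (v 0 * w 1 - v 1 * w 0) * (a 0 1 - b 0 1) = 0 := by
    linear_combination v 0 * e3 - w 0 * e1
  have k3 : (v 0 * w 1 - v 1 * w 0) * (a 1 0 - b 1 0) = 0 := by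
    linear_combination w 1 * e2 - v 1 * e4
  have k4 : (v 0 * w 1 - v 1 * w 0) * (a 1 1 - b 1 1) = 0 := by
    linear_combination v 0 * e4 - w 0 * e2
  simp only [mul_eq_zero, h, false_or, sub_eq_zero] at k1 k2 k3 k4
  ext i j
  fin_cases i <;> fin_cases j <;> assumption

lemma solv_of_comm {Γ K : Subgroup SL2} (hK : ∀ a ∈ K, ∀ b ∈ K, a * b = b * a)
    (h : ∀ a ∈ Γ, ∀ b ∈ Γ, a * b * a⁻¹ * b⁻¹ ∈ K) : IsSolvable Γ := by
  refine ⟨2, ?_⟩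
  rw [derivedSeries_succ, derivedSeries_succ, derivedSeries_zero]
  have h1 : ⁅(⊤ : Subgroup Γ), (⊤ : Subgroup Γ)⁆ ≤ K.subgroupOf Γ := by
    rw [Subgroup.commutator_le]
    intro a _ b _
    rw [Subgroup.mem_subgroupOf, commutatorElement_def]
    exact h a a.2 b b.2
  rw [eq_bot_iff, Subgroup.commutator_le]
  intro a ha b hb
  rw [Subgroup.mem_bot, commutatorElement_eq_one_iff_mul_comm]
  apply Subtype.ext
  exact hK a (h1 ha) b (h1 hb)

lemma solv_line {S : Set SL2} {v : Fin 2 → ℝ} (hv : v ≠ 0) (h : ∀ g ∈ S, ∃ c : ℝ, mv g v = c • v) :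
    IsSolvable (Subgroup.closure S) := by
  let K : Subgroup SL2 :=
    { carrier := {g | mv g v = v}
      mul_mem' := by
        intro a b (ha : _ = _) (hb : _ = _)
        change mv (a * b) v = v
        rw [mv_mul, hb, ha]
      one_mem' := mv_id v
      inv_mem' := by
        intro a (ha : _ = _)
        change mv a⁻¹ v = v
        conv_lhs => rw [← ha]
        exact mv_inv_mv a v }
  have hc0 : ∀ g : SL2, ∀ c : ℝ, mv g v = c • v → c ≠ 0 := by
    rintro g c hg rfl
    exact mv_ne_zero g hv (by simpa using hg)
  have hinv : ∀ g : SL2, ∀ c : ℝ, mv g v = c • v → mv g⁻¹ v = c⁻¹ • v := by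
    intro g c hg
    have := mv_inv_mv g v
    rw [hg, mv_smul] at this
    rw [← this, smul_smul, inv_mul_cancel₀ (hc0 g c hg), one_smul, this]
  have hΓ : ∀ g ∈ Subgroup.closure S, ∃ c : ℝ, mv g v = c • v := by
    intro g hg
    induction hg using Subgroup.closure_induction with
    | mem x hx => exact h x hx
    | one => exact ⟨1, by rw [mv_id, one_smul]⟩
    | mul a b _ _ ha hb =>
      obtain ⟨c, hc⟩ := ha
      obtain ⟨d, hd⟩ := hb
      exact ⟨d * c, by rw [mv_mul, hd, mv_smul, hc, smul_smul]⟩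
    | inv a _ ha => obtain ⟨c, hc⟩ := ha; exact ⟨c⁻¹, hinv a c hc⟩
  apply solv_of_comm (K := K)
  · have hw : dt v ![- v 1, v 0] ≠ 0 := by
      have := enorm2_pos hv
      have h2 := enorm2_sq v
      have : dt v ![- v 1, v 0] = enorm2 v ^ 2 := by rw [h2]; simp [dt]; ring
      rw [this]; positivity
    have hf : ∀ g : SL2, mv g v = v → ∃ c : ℝ, mv g ![- v 1, v 0] = ![- v 1, v 0] + c • v := by
      intro g hg
      have h1 := dt_mv g v ![- v 1, v 0]
      rw [hg] at h1
      obtain ⟨c, hc⟩ := par_of_dt (a := mv g ![- v 1, v 0] - ![- v 1, v 0]) hv (by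
        rw [dt_swap]; simp only [dt, Pi.sub_apply] at h1 ⊢; linarith)
      exact ⟨c, by rw [← hc]; abel⟩
    have mv_add : ∀ (g : SL2) (a b : Fin 2 → ℝ), mv g (a + b) = mv g a + mv g b := fun g a b =>
      Matrix.mulVec_add _ _ _
    intro a (ha : mv a v = v) b (hb : mv b v = v)
    obtain ⟨c, hc⟩ := hf a ha
    obtain ⟨d, hd⟩ := hf b hb
    apply ext_basis hw
    · rw [mv_mul, mv_mul, hb, ha, hb]
    · rw [mv_mul, mv_mul, hc, hd, mv_add, mv_add, mv_smul, mv_smul, hc, hd, ha, hb]; abel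
  · intro a ha b hb
    obtain ⟨c, hc⟩ := hΓ a ha
    obtain ⟨d, hd⟩ := hΓ b hb
    change mv (a * b * a⁻¹ * b⁻¹) v = v
    simp only [mv_mul, mv_smul, hinv b d hd, hinv a c hc, hc, hd, smul_smul]
    have h1 := hc0 a c hc
    have h2 := hc0 b d hd
    convert one_smul ℝ v using 2
    field_simp

lemma solv_pair {S : Set SL2} {v w : Fin 2 → ℝ} (hvw : dt v w ≠ 0)
    (h : ∀ g ∈ S, (∃ c d : ℝ, mv g v = c • v ∧ mv g w = d • w) ∨
      (∃ c d : ℝ, mv g v = c • w ∧ mv g w = d • v)) :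
    IsSolvable (Subgroup.closure S) := by
  have hv : v ≠ 0 := by rintro rfl; simp [dt] at hvw
  have hw : w ≠ 0 := by rintro rfl; simp [dt] at hvw
  let D : SL2 → Prop := fun g => ∃ c d : ℝ, mv g v = c • v ∧ mv g w = d • w
  let X : SL2 → Prop := fun g => ∃ c d : ℝ, mv g v = c • w ∧ mv g w = d • v
  have inv_gen : ∀ (g : SL2) (a b : Fin 2 → ℝ) (c : ℝ), a ≠ 0 → mv g a = c • b → mv g⁻¹ b = c⁻¹ • a := by
    intro g a b c ha hg
    have hc : c ≠ 0 := by
      rintro rfl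
      exact mv_ne_zero g ha (by simpa using hg)
    have := mv_inv_mv g a
    rw [hg, mv_smul] at this
    rw [← this, smul_smul, inv_mul_cancel₀ hc, one_smul]
  have DD : ∀ a b, D a → D b → D (a * b) := by
    rintro a b ⟨c, d, h1, h2⟩ ⟨c', d', h3, h4⟩
    exact ⟨c' * c, d' * d, by rw [mv_mul, h3, mv_smul, h1, smul_smul],
      by rw [mv_mul, h4, mv_smul, h2, smul_smul]⟩
  have DX : ∀ a b, D a → X b → X (a * b) := by
    rintro a b ⟨c, d, h1, h2⟩ ⟨c', d', h3, h4⟩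
    exact ⟨c' * d, d' * c, by rw [mv_mul, h3, mv_smul, h2, smul_smul],
      by rw [mv_mul, h4, mv_smul, h1, smul_smul]⟩
  have XD : ∀ a b, X a → D b → X (a * b) := by
    rintro a b ⟨c, d, h1, h2⟩ ⟨c', d', h3, h4⟩
    exact ⟨c' * c, d' * d, by rw [mv_mul, h3, mv_smul, h1, smul_smul],
      by rw [mv_mul, h4, mv_smul, h2, smul_smul]⟩
  have XX : ∀ a b, X a → X b → D (a * b) := by
    rintro a b ⟨c, d, h1, h2⟩ ⟨c', d', h3, h4⟩
    exact ⟨c' * d, d' * c, by rw [mv_mul, h3, mv_smul, h2, smul_smul],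
      by rw [mv_mul, h4, mv_smul, h1, smul_smul]⟩
  have Di : ∀ a, D a → D a⁻¹ := by
    rintro a ⟨c, d, h1, h2⟩
    exact ⟨_, _, inv_gen a v v c hv h1, inv_gen a w w d hw h2⟩
  have Xi : ∀ a, X a → X a⁻¹ := by
    rintro a ⟨c, d, h1, h2⟩
    exact ⟨_, _, inv_gen a w v d hw h2, inv_gen a v w c hv h1⟩
  have D1 : D 1 := ⟨1, 1, by rw [mv_id, one_smul], by rw [mv_id, one_smul]⟩
  let K : Subgroup SL2 :=
    { carrier := {g | D g}
      mul_mem' := by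
        intro a b ha hb
        exact DD a b ha hb
      one_mem' := D1
      inv_mem' := by
        intro a ha
        exact Di a ha }
  have hΓ : ∀ g ∈ Subgroup.closure S, D g ∨ X g := by
    intro g hg
    induction hg using Subgroup.closure_induction with
    | mem x hx => exact h x hx
    | one => exact Or.inl D1
    | mul a b _ _ ha hb =>
      rcases ha with ha | ha <;> rcases hb with hb | hb
      · exact Or.inl (DD a b ha hb)
      · exact Or.inr (DX a b ha hb)
      · exact Or.inr (XD a b ha hb)
      · exact Or.inl (XX a b ha hb)
    | inv a _ ha => exact ha.imp (Di a) (Xi a)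
  apply solv_of_comm (K := K)
  · rintro a ⟨c, d, h1, h2⟩ b ⟨c', d', h3, h4⟩
    apply ext_basis hvw
    · rw [mv_mul, mv_mul, h3, h1, mv_smul, mv_smul, h1, h3, smul_comm]
    · rw [mv_mul, mv_mul, h2, h4, mv_smul, mv_smul, h2, h4, smul_comm]
  · intro a ha b hb
    change D (a * b * a⁻¹ * b⁻¹)
    rcases hΓ a ha with ha | ha <;> rcases hΓ b hb with hb | hb
    · exact DD _ _ (DD _ _ (DD _ _ ha hb) (Di _ ha)) (Di _ hb)
    · exact XX _ _ (XD _ _ (DX _ _ ha hb) (Di _ ha)) (Xi _ hb)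
    · exact DD _ _ (XX _ _ (XD _ _ ha hb) (Xi _ ha)) (Di _ hb)
    · exact XX _ _ (DX _ _ (XX _ _ ha hb) (Xi _ ha)) (Xi _ hb)

/-- rotations -/
def IsRot (k : SL2) : Prop := k 0 0 = k 1 1 ∧ k 0 1 = - k 1 0

lemma solv_rot {S : Set SL2} (g0 : SL2) (h : ∀ g ∈ S, IsRot (g0 * g * g0⁻¹)) :
    IsSolvable (Subgroup.closure S) := by
  have hrot : ∀ a b : SL2, IsRot a → IsRot b → a * b = b * a := by
    rintro a b ⟨h1, h2⟩ ⟨h3, h4⟩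
    ext i j
    fin_cases i <;> fin_cases j <;>
      simp [Matrix.mul_apply, Fin.sum_univ_two, h1, h2, h3, h4] <;> ring
  have hS : ∀ a ∈ S, ∀ b ∈ S, a * b = b * a := by
    intro a ha b hb
    have := hrot _ _ (h a ha) (h b hb)
    have h2 : g0 * (a * b) * g0⁻¹ = g0 * (b * a) * g0⁻¹ := by
      calc g0 * (a * b) * g0⁻¹ = (g0 * a * g0⁻¹) * (g0 * b * g0⁻¹) := by group
        _ = (g0 * b * g0⁻¹) * (g0 * a * g0⁻¹) := this
        _ = g0 * (b * a) * g0⁻¹ := by group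
    simpa using h2
  apply solv_of_comm (K := Subgroup.closure S)
  · intro a ha b hb
    let c := Subgroup.closureCommGroupOfComm hS
    exact congrArg Subtype.val (c.mul_comm ⟨a, ha⟩ ⟨b, hb⟩)
  · intro a ha b hb
    exact mul_mem (mul_mem (mul_mem ha hb) (inv_mem ha)) (inv_mem hb)


/-- the unit circle -/
abbrev Y := {v : Fin 2 → ℝ // enorm2 v = 1}

lemma abs_le_enorm2 (v : Fin 2 → ℝ) (i : Fin 2) : |v i| ≤ enorm2 v := by
  apply abs_le_of_sq_le_sq _ (enorm2_nonneg v)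
  rw [enorm2_sq]
  fin_cases i
  · simp; positivity
  · simp; positivity

instance : CompactSpace Y := by
  apply isCompact_iff_compactSpace.1
  have hK : IsCompact (Set.univ.pi fun _ : Fin 2 => Set.Icc (-1 : ℝ) 1) :=
    isCompact_univ_pi fun _ => isCompact_Icc
  refine hK.of_isClosed_subset (isClosed_eq cont_enorm2 continuous_const) ?_
  intro v hv i _
  have := abs_le_enorm2 v i
  have hv' : enorm2 v = 1 := hv
  rw [hv'] at this
  exact abs_le.1 this

lemma unit_normalize {v : Fin 2 → ℝ} (hv : v ≠ 0) : enorm2 ((enorm2 v)⁻¹ • v) = 1 := by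
  have := enorm2_pos hv
  rw [enorm2_smul, abs_of_pos (inv_pos.2 this), inv_mul_cancel₀ this.ne']

/-- action on the circle -/
def ac (g : SL2) (y : Y) : Y :=
  ⟨(enorm2 (mv g y))⁻¹ • mv g y, unit_normalize (mv_ne_zero g (ne_zero_of_unit y.2))⟩

/-- cocycle on the circle -/
def lg (g : SL2) (y : Y) : ℝ := Real.log (enorm2 (mv g y))

lemma mv_pos (g : SL2) (y : Y) : 0 < enorm2 (mv g y) :=
  enorm2_pos (mv_ne_zero g (ne_zero_of_unit y.2))

lemma cont_mvY : Continuous fun p : SL2 × Y => mv p.1 p.2 :=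
  cont_mv.comp (continuous_fst.prodMk (continuous_subtype_val.comp continuous_snd))

lemma cont_ac : Continuous fun p : SL2 × Y => ac p.1 p.2 := by
  apply Continuous.subtype_mk
  exact ((cont_enorm2.comp cont_mvY).inv₀ (fun p => (mv_pos p.1 p.2).ne')).smul cont_mvY

lemma cont_lg : Continuous fun p : SL2 × Y => lg p.1 p.2 :=
  (cont_enorm2.comp cont_mvY).log (fun p => (mv_pos p.1 p.2).ne')

lemma cont_lg_right (g : SL2) : Continuous (lg g) :=
  Continuous.comp (f := fun y : Y => (g, y)) (g := fun p : SL2 × Y => lg p.1 p.2) cont_lg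
    (Continuous.prodMk continuous_const continuous_id)
lemma cont_ac_right (g : SL2) : Continuous (ac g) :=
  Continuous.comp (f := fun y : Y => (g, y)) (g := fun p : SL2 × Y => ac p.1 p.2) cont_ac
    (Continuous.prodMk continuous_const continuous_id)
lemma cont_lg_left (y : Y) : Continuous fun g : SL2 => lg g y :=
  Continuous.comp (f := fun g : SL2 => (g, y)) cont_lg (Continuous.prodMk continuous_id continuous_const)

lemma lg_mul (g h : SL2) (y : Y) : lg (g * h) y = lg g (ac h y) + lg h y := by
  have h1 := mv_pos h y
  have h2 := mv_pos g (ac h y)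
  unfold lg
  rw [← Real.log_mul h2.ne' h1.ne', mv_mul]
  congr 1
  rw [ac, mv_smul, enorm2_smul, abs_of_pos (inv_pos.2 h1)]
  field_simp

lemma log_nf_nonneg (g : SL2) : 0 ≤ Real.log (nf g) := Real.log_nonneg (one_le_nf g)

lemma abs_lg_le (g : SL2) (y : Y) : |lg g y| ≤ Real.log (nf g) := by
  have h0 := mv_pos g y
  have hn := nf_pos g
  have h1 := enorm2_mv_le g y
  have h2 := enorm2_le_mv g y
  rw [y.2] at h1 h2
  rw [mul_one] at h1
  rw [abs_le]
  constructor
  · have := Real.log_le_log one_pos h2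
    rw [Real.log_one, Real.log_mul hn.ne' h0.ne'] at this
    unfold lg; linarith
  · exact Real.log_le_log h0 h1

lemma ac_mul (g h : SL2) (y : Y) : ac (g * h) y = ac g (ac h y) := by
  have h1 := mv_pos h y
  apply Subtype.ext
  simp only [ac, mv_smul, mv_mul, enorm2_smul, abs_of_pos (inv_pos.2 h1), smul_smul]
  congr 1
  have h2 := mv_pos (g * h) y
  rw [mv_mul] at h2
  field_simp

lemma ac_one (y : Y) : ac 1 y = y := by
  apply Subtype.ext
  simp [ac, mv_id, y.2]

lemma supp_subset {μ : Measure SL2} {C : Set SL2} (hC : IsClosed C) (h : ∀ᵐ g ∂μ, g ∈ C) :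
    ∀ g ∈ measSupp μ, g ∈ C := by
  intro g hg
  by_contra hn
  have := hg Cᶜ hC.isOpen_compl hn
  exact this.ne' h

lemma int_log_nf {μ : Measure SL2} [IsProbabilityMeasure μ] {ε A : ℝ} (hm : Mom μ ε A) (n : ℕ) :
    Integrable (fun g => Real.log (nf g)) (M μ n) := by
  obtain ⟨hε, hA, h⟩ := hm
  have hi : Integrable (fun g => nf g ^ ε) (M μ n) := by
    refine ⟨(cont_nf.measurable.pow_const ε).aestronglyMeasurable, ?_⟩
    rw [hasFiniteIntegral_iff_ofReal (ae_of_all _ fun g => Real.rpow_nonneg (nf_nonneg g) _)]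
    exact (h n).trans_lt ENNReal.ofReal_lt_top
  refine (hi.div_const ε).mono' (Real.measurable_log.comp cont_nf.measurable).aestronglyMeasurable
    (ae_of_all _ fun g => ?_)
  rw [Real.norm_eq_abs, abs_of_nonneg (log_nf_nonneg g)]
  exact Real.log_le_rpow_div (nf_nonneg g) hε

/-- stationarity -/
def Stat (μ : Measure SL2) (ν : Measure Y) : Prop :=
  (μ.prod ν).map (fun p => ac p.1 p.2) = ν

lemma dt_ac_eq_zero (h : SL2) (y : Y) (v : Fin 2 → ℝ) :
    dt (ac h y) v = 0 ↔ dt y (mv h⁻¹ v) = 0 := by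
  have h1 := mv_pos h y
  rw [ac, dt_smul_left]
  have : dt (mv h y) v = dt y (mv h⁻¹ v) := by
    rw [← dt_mv h y, mv_mv_inv]
  rw [this]
  simp [h1.ne']

/-- mass of a line -/
def lm (ν : Measure Y) (v : Fin 2 → ℝ) : ENNReal := ν {y | dt y v = 0}

lemma cont_dtY : Continuous fun p : Y × (Fin 2 → ℝ) => dt p.1 p.2 :=
  cont_dt.comp ((continuous_subtype_val.comp continuous_fst).prodMk continuous_snd)

lemma meas_line (v : Fin 2 → ℝ) : MeasurableSet {y : Y | dt y v = 0} :=
  (isClosed_eq (cont_dtY.comp (continuous_id.prodMk continuous_const)) continuous_const).measurableSet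

lemma line_disj {v w : Fin 2 → ℝ} (h : dt v w ≠ 0) :
    Disjoint {y : Y | dt y v = 0} {y : Y | dt y w = 0} := by
  rw [Set.disjoint_left]
  intro y (h1 : dt y v = 0) (h2 : dt y w = 0)
  have hv : v ≠ 0 := by rintro rfl; simp [dt] at h
  obtain ⟨c, hc⟩ := par_of_dt hv h1
  rw [hc, dt_smul_left] at h2
  have hc0 : c ≠ 0 := by
    rintro rfl
    exact ne_zero_of_unit y.2 (by rw [hc, zero_smul])
  exact (mul_ne_zero hc0 h) h2

lemma lm_add {ν : Measure Y} [IsProbabilityMeasure ν] {v w : Fin 2 → ℝ} (h : dt v w ≠ 0) :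
    lm ν v + lm ν w ≤ 1 := by
  unfold lm
  rw [← measure_union (line_disj h) (meas_line w)]
  exact prob_le_one

lemma lm_add3 {ν : Measure Y} [IsProbabilityMeasure ν] {v w u : Fin 2 → ℝ} (h : dt v w ≠ 0)
    (h1 : dt v u ≠ 0) (h2 : dt w u ≠ 0) :
    lm ν v + lm ν w + lm ν u ≤ 1 := by
  unfold lm
  rw [← measure_union (line_disj h) (meas_line w), ← measure_union _ (meas_line u)]
  · exact prob_le_one
  · rw [Set.disjoint_union_left]
    exact ⟨line_disj h1, line_disj h2⟩

lemma lm_par {ν : Measure Y} {v w : Fin 2 → ℝ} (hv : v ≠ 0) (hw : w ≠ 0) (h : dt w v = 0) :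
    lm ν w = lm ν v := by
  obtain ⟨c, rfl⟩ := par_of_dt hv h
  have hc : c ≠ 0 := by rintro rfl; simp at hw
  unfold lm
  congr 1
  ext y
  simp [dt_smul_right, hc]

lemma lm_stat {μ : Measure SL2} [IsProbabilityMeasure μ] {ν : Measure Y} [IsProbabilityMeasure ν]
    (hs : Stat μ ν) (v : Fin 2 → ℝ) : ∫⁻ h, lm ν (mv h⁻¹ v) ∂μ = lm ν v := by
  conv_rhs => rw [lm, ← hs]
  rw [Measure.map_apply cont_ac.measurable (meas_line v), Measure.prod_apply]
  · apply lintegral_congr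
    intro h
    unfold lm
    congr 1
    ext y
    exact (dt_ac_eq_zero h y v).symm
  · exact cont_ac.measurable (meas_line v)

lemma lm_meas (μ : Measure SL2) [IsProbabilityMeasure μ] {ν : Measure Y} [IsProbabilityMeasure ν]
    (v : Fin 2 → ℝ) : Measurable fun h => lm ν (mv h⁻¹ v) := by
  have : MeasurableSet {p : SL2 × Y | dt (ac p.1 p.2) v = 0} := cont_ac.measurable (meas_line v)
  have := measurable_measure_prodMk_left (ν := ν) this
  convert this using 2 with h
  unfold lm
  congr 1
  ext y
  exact (dt_ac_eq_zero h y v).symm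

lemma line_lt_half {μ : Measure SL2} [IsProbabilityMeasure μ] {ν : Measure Y}
    [IsProbabilityMeasure ν] (hs : Stat μ ν) (hz : ZariskiDense μ)
    {v : Fin 2 → ℝ} (hv : v ≠ 0) : lm ν v < 1 / 2 := by
  by_contra hcon
  push Not at hcon
  have hle1 : ∀ w, lm ν w ≤ 1 := fun w => prob_le_one
  have hmax : ∀ v1 : Fin 2 → ℝ, v1 ≠ 0 → 1 / 2 ≤ lm ν v1 → ∀ w, w ≠ 0 → lm ν w ≤ lm ν v1 := by
    intro v1 hv1 h1 w hw
    by_cases h : dt w v1 = 0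
    · exact (lm_par hv1 hw h).le
    · have h2 := lm_add (ν := ν) h
      have : lm ν w ≤ 1 / 2 := by
        by_contra h3
        push Not at h3
        have : (1:ENNReal) < lm ν w + lm ν v1 := by
          calc (1:ENNReal) = 1/2 + 1/2 := (ENNReal.add_halves 1).symm
            _ < lm ν w + lm ν v1 := ENNReal.add_lt_add_of_lt_of_le (by simp) h3 h1
        exact absurd h2 (not_le.2 this)
      exact this.trans h1
  have hae : ∀ v1 : Fin 2 → ℝ, v1 ≠ 0 → 1 / 2 ≤ lm ν v1 → ∀ᵐ h ∂μ, lm ν (mv h⁻¹ v1) = lm ν v1 := by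
    intro v1 hv1 h1
    have := ae_eq_of_ae_le_of_lintegral_le (μ := μ) (f := fun h => lm ν (mv h⁻¹ v1))
      (g := fun _ => lm ν v1) (ae_of_all _ fun h => hmax v1 hv1 h1 _ (mv_ne_zero _ hv1))
      (by rw [lm_stat hs]; exact ((hle1 _).trans_lt ENNReal.one_lt_top).ne) aemeasurable_const
      (by rw [lm_stat hs]; simp)
    exact this
  have cdt : ∀ a b : Fin 2 → ℝ, Continuous fun h : SL2 => dt a (mv h b) := fun a b =>
    cont_dt.comp (continuous_const.prodMk (cont_mv.comp (continuous_id.prodMk continuous_const)))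
  have hinv : ∀ (h : SL2) (a b : Fin 2 → ℝ), dt (mv h⁻¹ a) b = dt a (mv h b) := fun h a b => dt_inv h a b
  by_cases hc : ∀ w, w ≠ 0 → lm ν w = lm ν v → dt w v = 0
  · apply hz
    apply solv_line hv
    have : ∀ g ∈ measSupp μ, g ∈ {h : SL2 | dt v (mv h v) = 0} := by
      apply supp_subset (isClosed_eq (cdt v v) continuous_const)
      filter_upwards [hae v hv hcon] with h hh
      have := hc _ (mv_ne_zero h⁻¹ hv) hh
      rwa [dt_inv] at this
    intro g hg
    apply par_of_dt hv
    rw [dt_swap, this g hg, neg_zero]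
  · push Not at hc
    obtain ⟨w, hw, hwv, hd⟩ := hc
    have hconw : 1 / 2 ≤ lm ν w := hwv ▸ hcon
    have h3 : ∀ u, u ≠ 0 → 1 / 2 ≤ lm ν u → dt v u * dt w u = 0 := by
      intro u hu hlu
      by_contra hne
      have h4 := lm_add3 (ν := ν) hd (right_ne_zero_of_mul hne) (left_ne_zero_of_mul hne)
      have : (1:ENNReal) < lm ν w + lm ν v + lm ν u := by
        calc (1:ENNReal) = 1/2 + 1/2 := (ENNReal.add_halves 1).symm
          _ < 1/2 + 1/2 + 1/2 := by
            rw [ENNReal.add_halves]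
            exact ENNReal.lt_add_right (by simp) (by simp)
          _ ≤ _ := by gcongr
      exact absurd h4 (not_le.2 this)
    apply hz
    apply solv_pair (v := v) (w := w) (by rw [dt_swap]; exact neg_ne_zero.2 hd)
    have : ∀ g ∈ measSupp μ, g ∈ {h : SL2 | dt v (mv h v) * dt v (mv h w) = 0 ∧ dt w (mv h v) * dt w (mv h w) = 0} := by
      apply supp_subset
      · exact (isClosed_eq ((cdt _ _).mul (cdt _ _)) continuous_const).inter
          (isClosed_eq ((cdt _ _).mul (cdt _ _)) continuous_const)
      · filter_upwards [hae v hv hcon, hae w hw hconw] with h h1 h2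
        have e1 := h3 _ (mv_ne_zero h⁻¹ hv) (by rw [h1]; exact hcon)
        have e2 := h3 _ (mv_ne_zero h⁻¹ hw) (by rw [h2]; exact hconw)
        rw [dt_swap v, dt_swap w, dt_inv, dt_inv, neg_mul_neg] at e1 e2
        exact ⟨e1, e2⟩
    intro g hg
    obtain ⟨e1, e2⟩ := this g hg
    have key : ∀ u : Fin 2 → ℝ, u ≠ 0 → dt v u = 0 → dt w u ≠ 0 := by
      intro u hu h1 h2
      obtain ⟨c, hc⟩ := par_of_dt hu h2
      obtain ⟨d, hd'⟩ := par_of_dt hu h1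
      apply hd
      rw [hc, hd', dt_smul_left, dt_smul_right]
      simp [dt]; right; right; ring
    have par : ∀ a b : Fin 2 → ℝ, b ≠ 0 → dt b a = 0 → ∃ c : ℝ, a = c • b := fun a b hb h =>
      par_of_dt hb (by rw [dt_swap, h, neg_zero])
    rcases mul_eq_zero.1 e1 with h1 | h1
    · left
      have h2 := (mul_eq_zero.1 e2).resolve_left (key _ (mv_ne_zero g hv) h1)
      obtain ⟨c, hc⟩ := par _ _ hv h1
      obtain ⟨d, hd⟩ := par _ _ hw h2
      exact ⟨c, d, hc, hd⟩
    · right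
      have h2 := (mul_eq_zero.1 e2).resolve_right (key _ (mv_ne_zero g hw) h1)
      obtain ⟨c, hc⟩ := par _ _ hw h2
      obtain ⟨d, hd⟩ := par _ _ hv h1
      exact ⟨c, d, hc, hd⟩


lemma abs_dt_sub_le (y w w' : Fin 2 → ℝ) (hy : enorm2 y = 1) :
    |dt y w| ≤ |dt y w'| + enorm2 (w - w') := by
  have h : dt y w = dt y w' + dt y (w - w') := by simp only [dt, Pi.sub_apply]; ring
  have h2 := abs_dt_le y (w - w')
  rw [hy, one_mul] at h2
  rw [h]
  exact (abs_add_le _ _).trans (by linarith)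

lemma meas_strip (w : Fin 2 → ℝ) (r : ℝ) : MeasurableSet {y : Y | |dt y w| ≤ r} :=
  (isClosed_le ((cont_dtY.comp (Continuous.prodMk continuous_id continuous_const)).abs)
    continuous_const).measurableSet

lemma exists_strip {ν : Measure Y} [IsProbabilityMeasure ν]
    (h : ∀ v : Fin 2 → ℝ, v ≠ 0 → lm ν v < 1 / 2) :
    ∃ r : ℝ, 0 < r ∧ r ≤ 1 ∧ ∃ p : ℝ, p < 1 / 2 ∧ ∀ w : Y, ν.real {y | |dt y w| ≤ r} ≤ p := by
  have key : ∃ r : ℝ, 0 < r ∧ r ≤ 1 ∧ ∃ p : ℝ, p < 1 / 2 ∧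
      ∀ w ∈ (Set.univ : Set Y), ν.real {y | |dt y w| ≤ r} ≤ p := by
    refine IsCompact.induction_on (p := fun s : Set Y => ∃ r : ℝ, 0 < r ∧ r ≤ 1 ∧ ∃ p : ℝ, p < 1 / 2 ∧
      ∀ w ∈ s, ν.real {y | |dt y w| ≤ r} ≤ p) isCompact_univ ?_ ?_ ?_ ?_
    · exact ⟨1, one_pos, le_rfl, 0, by norm_num, by simp⟩
    · rintro s t hst ⟨r, h0, h1, p, hp, hh⟩
      exact ⟨r, h0, h1, p, hp, fun w hw => hh w (hst hw)⟩
    · rintro s t ⟨r, h0, h1, p, hp, hh⟩ ⟨r', h0', h1', p', hp', hh'⟩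
      refine ⟨min r r', lt_min h0 h0', (min_le_left _ _).trans h1, max p p', max_lt hp hp', ?_⟩
      rintro w (hw | hw)
      · refine (measureReal_mono ?_).trans ((hh w hw).trans (le_max_left _ _))
        intro y hy
        have hy' : |dt y w| ≤ min r r' := hy
        exact (hy'.trans (min_le_left _ _) : |dt y w| ≤ r)
      · refine (measureReal_mono ?_).trans ((hh' w hw).trans (le_max_right _ _))
        intro y hy
        have hy' : |dt y w| ≤ min r r' := hy
        exact (hy'.trans (min_le_right _ _) : |dt y w| ≤ r')
    · intro w _
      -- strips shrink to the line
      have hw := h w (ne_zero_of_unit w.2)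
      have hlim : Tendsto (fun n : ℕ => ν {y : Y | |dt y w| ≤ 1 / ((n : ℝ) + 1)}) atTop (nhds (lm ν w)) := by
        have hset : {y : Y | dt y w = 0} = ⋂ n : ℕ, {y : Y | |dt y w| ≤ 1 / ((n : ℝ) + 1)} := by
          ext y
          simp only [Set.mem_ofPred_eq, Set.mem_iInter]
          constructor
          · intro h n; rw [h, abs_zero]; positivity
          · intro h
            have : |dt (y : Fin 2 → ℝ) w| ≤ 0 :=
              ge_of_tendsto' tendsto_one_div_add_atTop_nhds_zero_nat h
            exact abs_nonpos_iff.1 this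
        rw [lm, hset]
        apply tendsto_measure_iInter_atTop
        · intro n; exact (meas_strip w _).nullMeasurableSet
        · intro a b hab y hy
          have hy' : |dt y w| ≤ 1 / ((b : ℝ) + 1) := hy
          change |dt y w| ≤ 1 / ((a : ℝ) + 1)
          refine hy'.trans ?_
          apply one_div_le_one_div_of_le (by positivity)
          have : (a : ℝ) ≤ b := by exact_mod_cast hab
          linarith
        · exact ⟨0, measure_ne_top _ _⟩
      obtain ⟨n, hn⟩ := (hlim.eventually (gt_mem_nhds hw)).exists
      set r := 1 / ((n : ℝ) + 1) with hr
      have hr0 : 0 < r := by positivity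
      have hr1 : r ≤ 1 := by
        rw [hr, div_le_one (by positivity)]; linarith [Nat.cast_nonneg (α := ℝ) n]
      refine ⟨{w' : Y | enorm2 ((w : Fin 2 → ℝ) - w') < r / 2}, ?_, r / 2, by linarith, by linarith,
        ν.real {y : Y | |dt y w| ≤ r}, ?_, ?_⟩
      · apply mem_nhdsWithin_of_mem_nhds
        apply IsOpen.mem_nhds
        · refine isOpen_lt (cont_enorm2.comp ?_) continuous_const
          exact continuous_const.sub continuous_subtype_val
        · simp [enorm2, hr0]
      · rw [measureReal_def]
        have := (ENNReal.toReal_lt_toReal (measure_ne_top _ _) (by simp)).2 hn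
        simpa using this
      · intro w' hw'
        refine measureReal_mono ?_ (measure_ne_top _ _)
        intro y hy
        have h1 : |dt y w'| ≤ r / 2 := hy
        have h2 : enorm2 ((w : Fin 2 → ℝ) - w') < r / 2 := hw'
        have := abs_dt_sub_le y w w' y.2
        change |dt y w| ≤ r
        linarith
  obtain ⟨r, h0, h1, p, hp, hh⟩ := key
  exact ⟨r, h0, h1, p, hp, fun w => hh w trivial⟩

instance : LocallyCompactSpace SL2 := by
  have : IsClosed {A : Matrix (Fin 2) (Fin 2) ℝ | A.det = 1} :=
    isClosed_eq (continuous_id.matrix_det) continuous_const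
  have h2 : LocallyCompactSpace (Matrix (Fin 2) (Fin 2) ℝ) :=
    inferInstanceAs (LocallyCompactSpace (Fin 2 → Fin 2 → ℝ))
  exact this.isClosedEmbedding_subtypeVal.locallyCompactSpace

/-- averaged log-norm -/
def psi (ν : Measure Y) (g : SL2) : ℝ := ∫ y, lg g y ∂ν

lemma cont_psi (ν : Measure Y) [IsProbabilityMeasure ν] : Continuous (psi ν) := by
  have := continuous_parametric_integral_of_continuous (μ := ν) (f := lg) cont_lg (s := Set.univ) isCompact_univ
  simp only [Measure.restrict_univ] at this
  exact this

lemma int_lg (ν : Measure Y) [IsProbabilityMeasure ν] (g : SL2) : Integrable (lg g) ν :=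
  Integrable.of_bound (cont_lg_right g).aestronglyMeasurable (Real.log (nf g))
    (ae_of_all _ fun y => abs_lg_le g y)

lemma psi_lower {ν : Measure Y} [IsProbabilityMeasure ν] {r p : ℝ} (hr : 0 < r) (hr1 : r ≤ 1)
    (h : ∀ w : Y, ν.real {y | |dt y w| ≤ r} ≤ p) (g : SL2) :
    (1 - 2 * p) * Real.log (nf g) + Real.log (r / 2) ≤ psi ν g := by
  obtain ⟨w, hw, hc⟩ := exists_contracted g
  set B : Set Y := {y | |dt y w| ≤ r} with hB
  have hBm : MeasurableSet B := meas_strip w r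
  have hn := nf_pos g
  have hl := log_nf_nonneg g
  have hlr : Real.log (r / 2) ≤ 0 := Real.log_nonpos (by positivity) (by linarith)
  have hpt : ∀ y : Y, Real.log (nf g) + Real.log (r / 2) - B.indicator (fun _ => 2 * Real.log (nf g)) y ≤ lg g y := by
    intro y
    by_cases hy : y ∈ B
    · rw [Set.indicator_of_mem hy]
      have := (abs_le.1 (abs_lg_le g y)).1
      linarith
    · rw [Set.indicator_of_notMem hy, sub_zero, ← Real.log_mul hn.ne' (by positivity)]
      apply Real.log_le_log (by positivity)
      have h1 : r < |dt y w| := not_le.1 hy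
      have := hc y
      nlinarith
  have hi : Integrable (fun y => Real.log (nf g) + Real.log (r / 2) - B.indicator (fun _ => 2 * Real.log (nf g)) y) ν :=
    (integrable_const _).sub ((integrable_const _).indicator hBm)
  have h2 := integral_mono hi (int_lg ν g) hpt
  rw [integral_sub (integrable_const _) ((integrable_const _).indicator hBm),
    integral_indicator_const _ hBm, integral_const] at h2
  simp only [probReal_univ, smul_eq_mul] at h2
  have h3 := h ⟨w, hw⟩
  change ν.real B ≤ p at h3
  unfold psi
  nlinarith

lemma psi_min {ν : Measure Y} [IsProbabilityMeasure ν]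
    (h : ∀ v : Fin 2 → ℝ, v ≠ 0 → lm ν v < 1 / 2) : ∃ g0, ∀ g, psi ν g0 ≤ psi ν g := by
  obtain ⟨r, h0, h1, p, hp, hh⟩ := exists_strip h
  have hl := psi_lower h0 h1 hh
  set R := Real.exp ((psi ν 1 - Real.log (r / 2)) / (1 - 2 * p)) with hR
  have hp' : 0 < 1 - 2 * p := by linarith
  have hsub : ∀ g, psi ν g ≤ psi ν 1 → nf g ≤ R := by
    intro g hg
    rw [← Real.exp_log (nf_pos g), hR]
    apply Real.exp_le_exp.2
    rw [le_div_iff₀ hp']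
    linarith [hl g]
  obtain ⟨g0, hg0, hmin⟩ := (isCompact_nf_le R).exists_isMinOn ⟨1, hsub 1 le_rfl⟩ (cont_psi ν).continuousOn
  refine ⟨g0, fun g => ?_⟩
  by_cases hg : psi ν g ≤ psi ν 1
  · exact hmin (hsub g hg)
  · exact (hmin (hsub 1 le_rfl)).trans (not_le.1 hg).le

set_option maxHeartbeats 1000000 in
lemma psi_strict {ν : Measure Y} [IsProbabilityMeasure ν]
    (h : ∀ v : Fin 2 → ℝ, v ≠ 0 → lm ν v < 1 / 2) {g0 k : SL2} (hmin : ∀ g, psi ν g0 ≤ psi ν g)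
    (hk : psi ν (k * g0) = psi ν g0) : IsRot k := by
  have hdet := sl_det k
  obtain ⟨q11, h11⟩ : ∃ q : ℝ, q = k 0 0 ^ 2 + k 1 0 ^ 2 := ⟨_, rfl⟩
  obtain ⟨q12, h12⟩ : ∃ q : ℝ, q = k 0 0 * k 0 1 + k 1 0 * k 1 1 := ⟨_, rfl⟩
  obtain ⟨q22, h22⟩ : ∃ q : ℝ, q = k 0 1 ^ 2 + k 1 1 ^ 2 := ⟨_, rfl⟩
  have hq : q11 * q22 - q12 ^ 2 = 1 := by
    have : q11 * q22 - q12 ^ 2 = (k 0 0 * k 1 1 - k 0 1 * k 1 0) ^ 2 := by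
      rw [h11, h12, h22]; ring
    rw [this, hdet]; norm_num
  have hq11 : 0 ≤ q11 := by rw [h11]; positivity
  have hq22 : 0 ≤ q22 := by rw [h22]; positivity
  by_cases hI : q12 = 0 ∧ q11 = q22
  · obtain ⟨e1, e2⟩ := hI
    have e3 : q11 = 1 := by rw [e1, ← e2] at hq; nlinarith
    have e4 : (k 0 0 - k 1 1) ^ 2 + (k 0 1 + k 1 0) ^ 2 = 0 := by
      have : (k 0 0 - k 1 1) ^ 2 + (k 0 1 + k 1 0) ^ 2 = q11 + q22 - 2 * (k 0 0 * k 1 1 - k 0 1 * k 1 0) := by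
        rw [h11, h22]; ring
      rw [this, hdet, ← e2, e3]; norm_num
    have e5 : k 0 0 - k 1 1 = 0 := by nlinarith [sq_nonneg (k 0 0 - k 1 1), sq_nonneg (k 0 1 + k 1 0)]
    have e6 : k 0 1 + k 1 0 = 0 := by nlinarith [sq_nonneg (k 0 0 - k 1 1), sq_nonneg (k 0 1 + k 1 0)]
    exact ⟨by linarith, by linarith⟩
  exfalso
  obtain ⟨S, hS⟩ : ∃ S : ℝ, S = 2 + q11 + q22 := ⟨_, rfl⟩
  have hS0 : 0 < S := by rw [hS]; positivity
  obtain ⟨s, hs⟩ : ∃ s : ℝ, s = Real.sqrt S := ⟨_, rfl⟩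
  have hs0 : 0 < s := by rw [hs]; exact Real.sqrt_pos.2 hS0
  have hs2 : s ^ 2 = S := by rw [hs]; exact Real.sq_sqrt hS0.le
  obtain ⟨p, hp⟩ : ∃ p : ℝ, p = (1 + q11) / s := ⟨_, rfl⟩
  have hp0 : 0 < p := by rw [hp]; positivity
  have hsp : Real.sqrt p ^ 2 = p := Real.sq_sqrt hp0.le
  have hsp0 : 0 < Real.sqrt p := Real.sqrt_pos.2 hp0
  let m : SL2 := ⟨!![Real.sqrt p, q12 / s / Real.sqrt p; 0, 1 / Real.sqrt p], by
    rw [Matrix.det_fin_two_of]; field_simp; ring⟩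
  have m00 : m 0 0 = Real.sqrt p := rfl
  have m01 : m 0 1 = q12 / s / Real.sqrt p := rfl
  have m10 : m 1 0 = 0 := rfl
  have m11 : m 1 1 = 1 / Real.sqrt p := rfl
  have hα : ∀ u : Fin 2 → ℝ, enorm2 (mv k u) ^ 2 = q11 * u 0 ^ 2 + 2 * q12 * u 0 * u 1 + q22 * u 1 ^ 2 := by
    intro u; rw [enorm2_sq, mv_zero', mv_one', h11, h12, h22]; ring
  have hm : ∀ u : Fin 2 → ℝ, s * enorm2 (mv m u) ^ 2 = enorm2 u ^ 2 + enorm2 (mv k u) ^ 2 := by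
    intro u
    rw [hα, enorm2_sq, enorm2_sq, mv_zero', mv_one', m00, m01, m10, m11]
    have e1 : s * ((Real.sqrt p * u 0 + q12 / s / Real.sqrt p * u 1) ^ 2 + (0 * u 0 + 1 / Real.sqrt p * u 1) ^ 2)
        = s * (Real.sqrt p ^ 2 * u 0 ^ 2 + 2 * q12 / s * u 0 * u 1 + (q12 ^ 2 / s ^ 2 + 1) / Real.sqrt p ^ 2 * u 1 ^ 2) := by
      field_simp
      ring
    rw [e1, hsp]
    have e2 : (q12 ^ 2 / s ^ 2 + 1) / p = (1 + q22) / s := by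
      rw [hp]
      have : 1 + q11 ≠ 0 := by positivity
      field_simp
      rw [hs2, hS]
      linear_combination -hq
    rw [e2, hp]
    field_simp
    ring
  have hid : ∀ u : Fin 2 → ℝ, (q11 + q22) * (enorm2 u ^ 2 * enorm2 (mv k u) ^ 2) - (enorm2 u ^ 2) ^ 2 - (enorm2 (mv k u) ^ 2) ^ 2
      = (q12 * u 0 ^ 2 + (q22 - q11) * u 0 * u 1 - q12 * u 1 ^ 2) ^ 2 := by
    intro u
    rw [hα, enorm2_sq]
    linear_combination (u 0 ^ 2 + u 1 ^ 2) ^ 2 * hq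
  set D : Y → ℝ := fun y => lg g0 y + lg (k * g0) y - 2 * lg (m * g0) y with hD
  have hlog : ∀ y : Y, 2 * D y = Real.log (S * (enorm2 (mv g0 y) ^ 2 * enorm2 (mv k (mv g0 y)) ^ 2) /
      (enorm2 (mv g0 y) ^ 2 + enorm2 (mv k (mv g0 y)) ^ 2) ^ 2) := by
    intro y
    have p1 := mv_pos g0 y
    have p2 := mv_pos (k * g0) y
    have p3 := mv_pos (m * g0) y
    rw [hD]; simp only [lg]
    rw [mv_mul] at p2 p3 ⊢
    rw [mv_mul, ← hm, Real.log_div (by positivity) (by positivity), Real.log_mul (by positivity) (by positivity),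
      Real.log_mul (by positivity) (by positivity), mul_pow, ← hs2, Real.log_mul (by positivity) (by positivity)]
    simp only [Real.log_pow]
    push_cast
    ring
  have hDnn : ∀ y, 0 ≤ D y := by
    intro y
    have p1 := mv_pos g0 y
    have p2 := mv_pos (k * g0) y
    rw [mv_mul] at p2
    have := hlog y
    have h2 : 0 ≤ Real.log (S * (enorm2 (mv g0 y) ^ 2 * enorm2 (mv k (mv g0 y)) ^ 2) /
      (enorm2 (mv g0 y) ^ 2 + enorm2 (mv k (mv g0 y)) ^ 2) ^ 2) := by
      apply Real.log_nonneg
      rw [le_div_iff₀ (by positivity)]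
      have := hid (mv g0 y)
      have hsq := sq_nonneg (q12 * (mv g0 y) 0 ^ 2 + (q22 - q11) * (mv g0 y) 0 * (mv g0 y) 1 - q12 * (mv g0 y) 1 ^ 2)
      rw [← this] at hsq
      rw [hS]
      generalize enorm2 (mv g0 y) ^ 2 = α at *
      generalize enorm2 (mv k (mv g0 y)) ^ 2 = β at *
      linarith
    linarith
  have hDi : Integrable D ν := ((int_lg ν g0).add (int_lg ν (k * g0))).sub ((int_lg ν (m * g0)).const_mul 2)
  have hDint : ∫ y, D y ∂ν = 0 := by
    apply le_antisymm _ (integral_nonneg hDnn)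
    have e1 := integral_sub ((int_lg ν g0).add (int_lg ν (k * g0))) ((int_lg ν (m * g0)).const_mul 2)
    simp only [Pi.add_apply] at e1
    simp only [hD]
    rw [e1, integral_add (int_lg ν g0) (int_lg ν (k * g0)), integral_const_mul]
    have := hmin (m * g0)
    unfold psi at this hk
    rw [hk]; linarith
  have hae := (integral_eq_zero_iff_of_nonneg hDnn hDi).1 hDint
  have hF : ∀ᵐ (y : Y) ∂ν, q12 * (mv g0 y) 0 ^ 2 + (q22 - q11) * (mv g0 y) 0 * (mv g0 y) 1 - q12 * (mv g0 y) 1 ^ 2 = 0 := by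
    filter_upwards [hae] with y hy
    have p1 := mv_pos g0 y
    have p2 := mv_pos (k * g0) y
    rw [mv_mul] at p2
    have e := hlog y
    rw [hy, Pi.zero_apply, mul_zero] at e
    have hpos : 0 < S * (enorm2 (mv g0 y) ^ 2 * enorm2 (mv k (mv g0 y)) ^ 2) /
      (enorm2 (mv g0 y) ^ 2 + enorm2 (mv k (mv g0 y)) ^ 2) ^ 2 := by positivity
    have e2 := Real.eq_one_of_pos_of_log_eq_zero hpos e.symm
    rw [div_eq_one_iff_eq (by positivity), hS] at e2
    have := hid (mv g0 y)
    have e3 : (q12 * (mv g0 y) 0 ^ 2 + (q22 - q11) * (mv g0 y) 0 * (mv g0 y) 1 - q12 * (mv g0 y) 1 ^ 2) ^ 2 = 0 := by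
      rw [← this]; linarith
    exact pow_eq_zero_iff (two_ne_zero) |>.1 e3
  have hfac : ∃ a b : Fin 2 → ℝ, a ≠ 0 ∧ b ≠ 0 ∧ ∀ u : Fin 2 → ℝ,
      q12 * u 0 ^ 2 + (q22 - q11) * u 0 * u 1 - q12 * u 1 ^ 2 = 0 → dt u a = 0 ∨ dt u b = 0 := by
    by_cases h0 : q12 = 0
    · have h1 : q22 - q11 ≠ 0 := fun h => hI ⟨h0, by linarith⟩
      refine ⟨![0, 1], ![1, 0], by intro h; simpa using congrFun h 1, by intro h; simpa using congrFun h 0, ?_⟩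
      intro u hu
      rw [h0] at hu
      have : (q22 - q11) * (u 0 * u 1) = 0 := by linarith
      rcases mul_eq_zero.1 ((mul_eq_zero.1 this).resolve_left h1) with h | h
      · left; simp [dt, h]
      · right; simp [dt, h]
    · set d := Real.sqrt ((q22 - q11) ^ 2 + 4 * q12 ^ 2) with hd
      have hd2 : d ^ 2 = (q22 - q11) ^ 2 + 4 * q12 ^ 2 := Real.sq_sqrt (by positivity)
      refine ⟨![(-(q22 - q11) + d) / (2 * q12), 1], ![(-(q22 - q11) - d) / (2 * q12), 1],
        by intro h; simpa using congrFun h 1, by intro h; simpa using congrFun h 1, ?_⟩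
      intro u hu
      apply mul_eq_zero.1
      have : q12 * (dt u ![(-(q22 - q11) + d) / (2 * q12), 1] * dt u ![(-(q22 - q11) - d) / (2 * q12), 1]) = 0 := by
        rw [← hu]
        simp only [dt, Matrix.cons_val_zero, Matrix.cons_val_one]
        field_simp
        linear_combination (- u 1 ^ 2) * hd2
      exact (mul_eq_zero.1 this).resolve_left h0
  obtain ⟨a, b, ha, hb, hab⟩ := hfac
  have hcov : ∀ᵐ (y : Y) ∂ν, y ∈ {y : Y | dt y (mv g0⁻¹ a) = 0} ∪ {y : Y | dt y (mv g0⁻¹ b) = 0} := by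
    filter_upwards [hF] with y hy
    have tr : ∀ c, dt (y : Fin 2 → ℝ) (mv g0⁻¹ c) = dt (mv g0 y) c := by
      intro c; rw [← dt_mv g0, mv_mv_inv]
    rcases hab _ hy with h | h
    · left; change dt _ _ = 0; rw [tr, h]
    · right; change dt _ _ = 0; rw [tr, h]
  have h1 : (1 : ENNReal) ≤ lm ν (mv g0⁻¹ a) + lm ν (mv g0⁻¹ b) := by
    rw [← (prob_compl_eq_zero_iff ((meas_line _).union (meas_line _))).1 hcov]
    exact measure_union_le _ _
  have h2 := ENNReal.add_lt_add (h _ (mv_ne_zero g0⁻¹ ha)) (h _ (mv_ne_zero g0⁻¹ hb))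
  rw [ENNReal.add_halves] at h2
  exact absurd h1 (not_le.2 h2)

/-- Furstenberg positivity -/
theorem furst {μ : Measure SL2} [IsProbabilityMeasure μ] {ν : Measure Y}
    [IsProbabilityMeasure ν] (hs : Stat μ ν) (hz : ZariskiDense μ) {ε A : ℝ} (hm : Mom μ ε A) :
    0 < ∫ h, psi ν h ∂μ := by
  by_contra hcon
  push Not at hcon
  have hl : ∀ v : Fin 2 → ℝ, v ≠ 0 → lm ν v < 1 / 2 := fun v hv => line_lt_half hs hz hv
  obtain ⟨g0, hmin⟩ := psi_min hl
  have hlogi : Integrable (fun g => Real.log (nf g)) μ := by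
    have := int_log_nf hm 1
    rwa [M_one] at this
  have habs : ∀ g, |psi ν g| ≤ Real.log (nf g) := by
    intro g
    unfold psi
    have := norm_integral_le_of_norm_le_const (μ := ν) (f := lg g) (C := Real.log (nf g)) (ae_of_all _ fun y => abs_lg_le g y)
    simpa using this
  have hpi : Integrable (psi ν) μ :=
    hlogi.mono' (cont_psi ν).aestronglyMeasurable (ae_of_all _ habs)
  -- cocycle
  have hsplit : ∀ h, psi ν (g0 * h) = (∫ y, lg g0 (ac h y) ∂ν) + psi ν h := by
    intro h
    unfold psi
    rw [← integral_add _ (int_lg ν h)]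
    · exact integral_congr_ae (ae_of_all _ fun y => lg_mul g0 h y)
    · exact Integrable.of_bound ((cont_lg_right g0).comp (cont_ac_right h)).aestronglyMeasurable
        (Real.log (nf g0)) (ae_of_all _ fun y => abs_lg_le g0 _)
  have hprodi : Integrable (fun p : SL2 × Y => lg g0 (ac p.1 p.2)) (μ.prod ν) :=
    Integrable.of_bound ((cont_lg_right g0).comp cont_ac).aestronglyMeasurable
        (Real.log (nf g0)) (ae_of_all _ fun y => abs_lg_le g0 _)
  have hst : ∫ h, ∫ y, lg g0 (ac h y) ∂ν ∂μ = psi ν g0 := by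
    rw [← integral_prod _ hprodi]
    unfold psi
    conv_rhs => rw [← hs]
    rw [integral_map cont_ac.aemeasurable (cont_lg_right g0).aestronglyMeasurable]
  have hi1 : Integrable (fun h => ∫ y, lg g0 (ac h y) ∂ν) μ := hprodi.integral_prod_left
  have hnn : ∀ h, 0 ≤ psi ν (g0 * h) - psi ν g0 := fun h => sub_nonneg.2 (hmin _)
  have hintg : Integrable (fun h => psi ν (g0 * h) - psi ν g0) μ := by
    simp_rw [hsplit]
    exact (hi1.add hpi).sub (integrable_const _)
  have h0 : ∫ h, (psi ν (g0 * h) - psi ν g0) ∂μ = 0 := by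
    apply le_antisymm _ (integral_nonneg hnn)
    simp_rw [hsplit]
    have e1 := integral_sub (hi1.add hpi) (integrable_const (psi ν g0))
    simp only [Pi.add_apply] at e1
    rw [e1, integral_add hi1 hpi, hst]
    simp
    exact hcon
  have hae := (integral_eq_zero_iff_of_nonneg hnn hintg).1 h0
  have hsupp : ∀ g ∈ measSupp μ, g ∈ {h : SL2 | psi ν (g0 * h) = psi ν g0} := by
    apply supp_subset
    · exact isClosed_eq ((cont_psi ν).comp (continuous_const.mul continuous_id)) continuous_const
    · filter_upwards [hae] with h hh
      have : psi ν (g0 * h) - psi ν g0 = 0 := hh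
      exact sub_eq_zero.1 this
  apply hz
  apply solv_rot g0
  intro g hg
  apply psi_strict hl hmin
  have := hsupp g hg
  rwa [inv_mul_cancel_right]


lemma int_conv {μ : Measure SL2} [IsProbabilityMeasure μ] (k : ℕ) {F : SL2 → ℝ}
    (hF : Integrable F (M μ (k + 1))) :
    ∫ g, ∫ h, F (h * g) ∂μ ∂(M μ k) = ∫ g, F g ∂(M μ (k + 1)) := by
  have h1 : M μ (k + 1) = (μ.prod (M μ k)).map (fun p => p.1 * p.2) := rfl
  rw [h1] at hF ⊢
  have hm : AEMeasurable (fun p : SL2 × SL2 => p.1 * p.2) (μ.prod (M μ k)) := measurable_mul.aemeasurable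
  rw [integral_map hm hF.1]
  have hi : Integrable (fun p : SL2 × SL2 => F (p.1 * p.2)) (μ.prod (M μ k)) :=
    (integrable_map_measure hF.1 hm).1 hF
  rw [integral_prod _ hi]
  exact (integral_integral_swap (f := fun h g => F (h * g)) hi).symm

/-- averaged empirical measures -/
def emp (μ : Measure SL2) (N : ℕ) (y : Y) : Measure Y :=
  ((N : ENNReal) + 1)⁻¹ • ∑ k ∈ Finset.range (N + 1), (M μ k).map (fun g => ac g y)

lemma cont_ac_left (y : Y) : Continuous fun g : SL2 => ac g y :=
  Continuous.comp (f := fun g : SL2 => (g, y)) (g := fun p : SL2 × Y => ac p.1 p.2) cont_ac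
    (Continuous.prodMk continuous_id continuous_const)

lemma emp_prob (μ : Measure SL2) [IsProbabilityMeasure μ] (N : ℕ) (y : Y) :
    IsProbabilityMeasure (emp μ N y) := by
  constructor
  unfold emp
  have h : ∀ k, (M μ k).map (fun g => ac g y) Set.univ = 1 := by
    intro k
    rw [Measure.map_apply (cont_ac_left y).measurable MeasurableSet.univ]
    simp
  rw [Measure.smul_apply, Measure.finsetSum_apply]
  simp only [h, Finset.sum_const, Finset.card_range, smul_eq_mul, nsmul_eq_mul, mul_one]
  push_cast
  exact ENNReal.inv_mul_cancel (by simp) (by finiteness)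

lemma int_emp (μ : Measure SL2) [IsProbabilityMeasure μ] (N : ℕ) (y : Y) {f : Y → ℝ}
    (hf : Continuous f) :
    ∫ z, f z ∂(emp μ N y) = ((N : ℝ) + 1)⁻¹ * ∑ k ∈ Finset.range (N + 1), ∫ g, f (ac g y) ∂(M μ k) := by
  obtain ⟨C, hC⟩ : ∃ C, ∀ z, ‖f z‖ ≤ C := by
    obtain ⟨C, hC⟩ := isCompact_univ.exists_bound_of_continuousOn hf.continuousOn
    exact ⟨C, fun z => hC z trivial⟩
  unfold emp
  rw [integral_smul_measure, integral_finsetSum_measure]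
  · simp only [smul_eq_mul]
    congr 1
    · rw [ENNReal.toReal_inv, ENNReal.toReal_add (by simp) (by simp)]; simp
    · refine Finset.sum_congr rfl fun k _ => ?_
      rw [integral_map (cont_ac_left y).aemeasurable hf.aestronglyMeasurable]
  · intro k _
    have : IsProbabilityMeasure ((M μ k).map (fun g => ac g y)) :=
      Measure.isProbabilityMeasure_map (cont_ac_left y).aemeasurable
    exact Integrable.of_bound hf.aestronglyMeasurable C (ae_of_all _ hC)

/-- uniform positive drift at some time -/
theorem exists_drift {μ : Measure SL2} [IsProbabilityMeasure μ] (hz : ZariskiDense μ) {ε A : ℝ}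
    (hm : Mom μ ε A) : ∃ N : ℕ, ∀ y : Y, 1 ≤ ∫ g, lg g y ∂(M μ (N + 1)) := by
  by_contra hcon
  push Not at hcon
  choose y hy using hcon
  let pm : ℕ → ProbabilityMeasure Y := fun N => ⟨emp μ N (y N), emp_prob μ N (y N)⟩
  let U : Ultrafilter ℕ := hyperfilter ℕ
  have hU : (U : Filter ℕ) ≤ atTop := by
    rw [← Nat.cofinite_eq_atTop]; exact hyperfilter_le_cofinite
  obtain ⟨ν, -, hν⟩ := isCompact_univ.ultrafilter_le_nhds (U.map pm) (by simp)
  have hν' : Tendsto pm U (nhds ν) := hν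
  have hlim : ∀ f : Y → ℝ, Continuous f →
      Tendsto (fun N => ∫ z, f z ∂(emp μ N (y N))) U (nhds (∫ z, f z ∂(ν : Measure Y))) := by
    intro f hf
    have := (ProbabilityMeasure.tendsto_iff_forall_integral_tendsto.1 hν')
      (BoundedContinuousFunction.mkOfCompact ⟨f, hf⟩)
    exact this
  have hN : Tendsto (fun N : ℕ => ((N : ℝ) + 1)⁻¹) U (nhds 0) := by
    have := (tendsto_one_div_add_atTop_nhds_zero_nat (𝕜 := ℝ)).mono_left hU
    simpa using this
  have hlog : ∀ k, Integrable (fun g => Real.log (nf g)) (M μ k) := int_log_nf hm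
  have hlog1 : Integrable (fun g => Real.log (nf g)) μ := by
    have := hlog 1
    rwa [M_one] at this
  -- stationarity
  have hstat : Stat μ (ν : Measure Y) := by
    have : IsProbabilityMeasure ((μ.prod (ν : Measure Y)).map (fun p : SL2 × Y => ac p.1 p.2)) :=
      Measure.isProbabilityMeasure_map cont_ac.aemeasurable
    unfold Stat
    apply ext_of_forall_integral_eq_of_IsFiniteMeasure
    intro f
    rw [integral_map cont_ac.aemeasurable f.continuous.aestronglyMeasurable]
    have hfb : ∀ z, ‖f z‖ ≤ ‖f‖ := f.norm_coe_le_norm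
    have hi : Integrable (fun p : SL2 × Y => f (ac p.1 p.2)) (μ.prod (ν : Measure Y)) :=
      Integrable.of_bound (f.continuous.comp cont_ac).aestronglyMeasurable ‖f‖ (ae_of_all _ fun p => hfb _)
    rw [integral_prod_symm _ hi]
    have hPf : Continuous fun z : Y => ∫ h, f (ac h z) ∂μ := by
      apply continuous_of_dominated (bound := fun _ => ‖f‖)
      · intro z; exact (f.continuous.comp (cont_ac_left z)).aestronglyMeasurable
      · intro z; exact ae_of_all _ fun h => hfb _
      · exact integrable_const _
      · exact ae_of_all _ fun h => f.continuous.comp (cont_ac_right h)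
    have l1 := hlim _ hPf
    have l2 := hlim _ f.continuous
    have hdiff : ∀ N : ℕ, (∫ z, (∫ h, f (ac h z) ∂μ) ∂(emp μ N (y N))) - ∫ z, f z ∂(emp μ N (y N))
        = ((N : ℝ) + 1)⁻¹ * ((∫ g, f (ac g (y N)) ∂(M μ (N + 1))) - ∫ g, f (ac g (y N)) ∂(M μ 0)) := by
      intro N
      rw [int_emp μ N (y N) hPf, int_emp μ N (y N) f.continuous, ← mul_sub, ← Finset.sum_sub_distrib]
      congr 1
      rw [← Finset.sum_range_sub (fun k => ∫ g, f (ac g (y N)) ∂(M μ k))]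
      refine Finset.sum_congr rfl fun k _ => ?_
      rw [← int_conv k]
      · simp only [ac_mul]
      · exact Integrable.of_bound (f.continuous.comp (cont_ac_left _)).aestronglyMeasurable ‖f‖ (ae_of_all _ fun p => hfb _)
    have l3 : Tendsto (fun N : ℕ => ((N : ℝ) + 1)⁻¹ * ((∫ g, f (ac g (y N)) ∂(M μ (N + 1))) - ∫ g, f (ac g (y N)) ∂(M μ 0))) U (nhds 0) := by
      apply squeeze_zero_norm (a := fun N : ℕ => ((N : ℝ) + 1)⁻¹ * (2 * ‖f‖))
      · intro N
        rw [norm_mul, Real.norm_of_nonneg (by positivity : (0:ℝ) ≤ ((N : ℝ) + 1)⁻¹)]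
        apply mul_le_mul_of_nonneg_left _ (by positivity)
        have b : ∀ k, ‖∫ g, f (ac g (y N)) ∂(M μ k)‖ ≤ ‖f‖ := by
          intro k
          have := norm_integral_le_of_norm_le_const (μ := M μ k) (f := fun g => f (ac g (y N))) (C := ‖f‖) (ae_of_all _ fun g => hfb _)
          simpa using this
        refine (norm_sub_le _ _).trans ?_
        linarith [b (N + 1), b 0]
      · simpa using hN.mul_const (2 * ‖f‖)
    have l4 := (l1.sub l2).congr hdiff
    have := tendsto_nhds_unique l4 l3
    linarith
  -- drift
  have hL : Continuous fun z : Y => ∫ h, lg h z ∂μ := by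
    apply continuous_of_dominated (bound := fun g => Real.log (nf g))
    · intro z; exact (cont_lg_left z).aestronglyMeasurable
    · intro z; exact ae_of_all _ fun h => abs_lg_le h z
    · exact hlog1
    · exact ae_of_all _ fun h => cont_lg_right h
  have hlgi : ∀ k z, Integrable (fun g => lg g z) (M μ k) := fun k z =>
    (hlog k).mono' (cont_lg_left z).aestronglyMeasurable (ae_of_all _ fun g => abs_lg_le g z)
  have l1 := hlim _ hL
  have hval : ∀ N : ℕ, ∫ z, (∫ h, lg h z ∂μ) ∂(emp μ N (y N)) ≤ ((N : ℝ) + 1)⁻¹ := by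
    intro N
    rw [int_emp μ N (y N) hL]
    have : ∑ k ∈ Finset.range (N + 1), ∫ g, (∫ h, lg h (ac g (y N)) ∂μ) ∂(M μ k)
        = (∫ g, lg g (y N) ∂(M μ (N + 1))) - ∫ g, lg g (y N) ∂(M μ 0) := by
      rw [← Finset.sum_range_sub (fun k => ∫ g, lg g (y N) ∂(M μ k))]
      refine Finset.sum_congr rfl fun k _ => ?_
      rw [← int_conv k (hlgi (k + 1) _)]
      have hin : ∀ g, ∫ h, lg (h * g) (y N) ∂μ = (∫ h, lg h (ac g (y N)) ∂μ) + lg g (y N) := by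
        intro g
        simp only [lg_mul]
        rw [integral_add]
        · simp
        · have := hlgi 1 (ac g (y N)); rwa [M_one] at this
        · exact integrable_const _
      simp only [hin]
      rw [integral_add _ (hlgi k _)]
      · ring
      · refine Integrable.of_bound (hL.comp (cont_ac_left _)).aestronglyMeasurable (∫ h, Real.log (nf h) ∂μ)
          (ae_of_all _ fun g => ?_)
        exact norm_integral_le_of_norm_le hlog1 (ae_of_all _ fun h => abs_lg_le h _)
    rw [this]
    have h0 : ∫ g, lg g (y N) ∂(M μ 0) = 0 := by
      rw [M, integral_dirac' _ _ (cont_lg_left _).stronglyMeasurable]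
      simp [lg, mv_id, (y N).2]
    rw [h0, sub_zero]
    have := hy N
    have hp : (0:ℝ) < ((N : ℝ) + 1)⁻¹ := by positivity
    nlinarith
  have hle : ∫ z, (∫ h, lg h z ∂μ) ∂(ν : Measure Y) ≤ 0 := le_of_tendsto_of_tendsto' l1 hN hval
  have hpos := furst hstat hz hm
  have hi : Integrable (fun p : SL2 × Y => lg p.1 p.2) (μ.prod (ν : Measure Y)) := by
    refine Integrable.mono' (g := fun p : SL2 × Y => Real.log (nf p.1)) ?_ cont_lg.aestronglyMeasurable
      (ae_of_all _ fun p => abs_lg_le _ _)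
    exact hlog1.comp_fst (ν : Measure Y)
  have : ∫ h, psi (ν : Measure Y) h ∂μ = ∫ z, (∫ h, lg h z ∂μ) ∂(ν : Measure Y) := by
    unfold psi
    exact integral_integral_swap (f := fun h z => lg h z) hi
  linarith


lemma lint_add' (μ : Measure SL2) [IsProbabilityMeasure μ] (m n : ℕ) {f : SL2 → ENNReal}
    (hf : Measurable f) :
    ∫⁻ g, f g ∂(M μ (m + n)) = ∫⁻ h, ∫⁻ g, f (g * h) ∂(M μ m) ∂(M μ n) := by
  rw [lint_add μ m n hf]
  exact lintegral_lintegral_swap (f := fun g h => f (g * h)) (hf.comp measurable_mul).aemeasurable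

lemma exp_le_quad (x : ℝ) : Real.exp x ≤ 1 + x + x ^ 2 * Real.exp |x| := by
  have h1 : Real.exp x - 1 ≤ x * Real.exp x := by
    have := Real.add_one_le_exp (-x)
    have h2 := Real.exp_pos x
    have h3 : Real.exp x * Real.exp (-x) = 1 := by rw [← Real.exp_add]; simp
    nlinarith
  have h4 := Real.add_one_le_exp x
  rcases le_total 0 x with h | h
  · rw [abs_of_nonneg h]
    nlinarith
  · have h5 : 1 ≤ Real.exp |x| := Real.one_le_exp (abs_nonneg x)
    nlinarith [sq_nonneg x]

/-- inverse power of the norm -/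
def ep (δ : ℝ) (v : Fin 2 → ℝ) (g : SL2) : ENNReal := ENNReal.ofReal (enorm2 (mv g v) ^ (-δ))

lemma cont_mv_left (v : Fin 2 → ℝ) : Continuous fun g : SL2 => mv g v :=
  Continuous.comp (f := fun g : SL2 => (g, v)) (g := fun p : SL2 × (Fin 2 → ℝ) => mv p.1 p.2) cont_mv
    (Continuous.prodMk continuous_id continuous_const)

lemma meas_ep (δ : ℝ) (v : Fin 2 → ℝ) : Measurable (ep δ v) :=
  ENNReal.measurable_ofReal.comp ((cont_enorm2.comp (cont_mv_left v)).measurable.pow_const _)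

lemma ep_eq_exp (δ : ℝ) (y : Y) (g : SL2) : ep δ y g = ENNReal.ofReal (Real.exp (-(δ * lg g y))) := by
  unfold ep lg
  rw [Real.rpow_def_of_pos (mv_pos g y)]
  congr 2; ring

lemma ep_mul (δ : ℝ) (y : Y) (g h : SL2) : ep δ y (g * h) = ep δ (ac h y) g * ep δ y h := by
  rw [ep_eq_exp, ep_eq_exp, ep_eq_exp, ← ENNReal.ofReal_mul (Real.exp_pos _).le, ← Real.exp_add, lg_mul]
  congr 2; ring

lemma ep_le {δ ε : ℝ} (hδ : 0 ≤ δ) (hδε : δ ≤ ε) (y : Y) (g : SL2) :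
    ep δ y g ≤ ENNReal.ofReal (nf g ^ ε) := by
  rw [ep_eq_exp]
  apply ENNReal.ofReal_le_ofReal
  rw [Real.rpow_def_of_pos (nf_pos g)]
  apply Real.exp_le_exp.2
  have h1 := (abs_le.1 (abs_lg_le g y)).1
  have h2 := log_nf_nonneg g
  nlinarith

lemma ep_submul {μ : Measure SL2} [IsProbabilityMeasure μ] (δ : ℝ) (m n : ℕ) (a : ENNReal)
    (ha : ∀ y : Y, ∫⁻ g, ep δ y g ∂(M μ m) ≤ a) (y : Y) :
    ∫⁻ g, ep δ y g ∂(M μ (m + n)) ≤ a * ∫⁻ g, ep δ y g ∂(M μ n) := by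
  rw [lint_add' μ m n (meas_ep δ y), ← lintegral_const_mul _ (meas_ep δ y)]
  apply lintegral_mono
  intro h
  beta_reduce
  simp only [ep_mul]
  rw [lintegral_mul_const _ (meas_ep δ _)]
  gcongr
  exact ha _

lemma drift_step {μ : Measure SL2} [IsProbabilityMeasure μ] {ε A : ℝ} (hm : Mom μ ε A) {N : ℕ}
    (hN : ∀ y : Y, 1 ≤ ∫ g, lg g y ∂(M μ N)) :
    ∃ δ : ℝ, 0 < δ ∧ δ ≤ ε ∧ δ ≤ 1 ∧
      ∀ y : Y, ∫⁻ g, ep δ y g ∂(M μ N) ≤ ENNReal.ofReal (1 - δ / 2) := by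
  have hlog := int_log_nf hm N
  obtain ⟨hε, hA, h⟩ := hm
  set B := A ^ (N + 1) with hB
  have hB1 : 1 ≤ B := one_le_pow₀ hA
  have hnn : ∀ g : SL2, 0 ≤ nf g ^ ε := fun g => Real.rpow_nonneg (nf_nonneg g) _
  have hi : Integrable (fun g => nf g ^ ε) (M μ N) := by
    refine ⟨(cont_nf.measurable.pow_const ε).aestronglyMeasurable, ?_⟩
    rw [hasFiniteIntegral_iff_ofReal (ae_of_all _ hnn)]
    exact (h N).trans_lt ENNReal.ofReal_lt_top
  have hintg : ∫ g, nf g ^ ε ∂(M μ N) ≤ B := by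
    have := h N
    rw [← ofReal_integral_eq_lintegral_ofReal hi (ae_of_all _ hnn)] at this
    exact (ENNReal.ofReal_le_ofReal_iff (by linarith)).1 this
  set K := 16 / ε ^ 2 with hK
  have hK0 : 0 < K := by positivity
  obtain ⟨δ, hδ0, hδ1, hδ2, hδ3⟩ : ∃ δ : ℝ, 0 < δ ∧ δ ≤ ε / 2 ∧ δ ≤ 1 ∧ δ ≤ 1 / (2 * (K * B)) :=
    ⟨min (ε / 2) (min 1 (1 / (2 * (K * B)))), by positivity, min_le_left _ _,
      (min_le_right _ _).trans (min_le_left _ _), (min_le_right _ _).trans (min_le_right _ _)⟩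
  refine ⟨δ, hδ0, by linarith, hδ2, fun y => ?_⟩
  have hlgi : Integrable (fun g => lg g y) (M μ N) :=
    hlog.mono' (cont_lg_left y).aestronglyMeasurable (ae_of_all _ fun g => abs_lg_le g y)
  have hpt : ∀ g : SL2, Real.exp (-(δ * lg g y)) ≤ 1 - δ * lg g y + δ ^ 2 * (K * nf g ^ ε) := by
    intro g
    have h1 := exp_le_quad (-(δ * lg g y))
    have h2 := abs_lg_le g y
    have h3 := log_nf_nonneg g
    have h4 : Real.log (nf g) ≤ nf g ^ (ε / 4) / (ε / 4) := Real.log_le_rpow_div (nf_nonneg g) (by positivity)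
    have h5 : Real.exp |(-(δ * lg g y))| ≤ nf g ^ (ε / 2) := by
      rw [Real.rpow_def_of_pos (nf_pos g)]
      apply Real.exp_le_exp.2
      rw [abs_neg, abs_mul, abs_of_pos hδ0, mul_comm (Real.log _)]
      exact mul_le_mul hδ1 h2 (abs_nonneg _) (by linarith)
    have h6 : lg g y ^ 2 ≤ (nf g ^ (ε / 4) / (ε / 4)) ^ 2 := by
      rw [← sq_abs]
      exact pow_le_pow_left₀ (abs_nonneg _) (h2.trans h4) 2
    have h7 : (nf g ^ (ε / 4) / (ε / 4)) ^ 2 = K * nf g ^ (ε / 2) := by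
      rw [div_pow, ← Real.rpow_natCast, ← Real.rpow_mul (nf_nonneg g), hK]
      have : ε / 4 * ((2 : ℕ) : ℝ) = ε / 2 := by push_cast; ring
      rw [this]; field_simp; ring
    have h8 : nf g ^ (ε / 2) * nf g ^ (ε / 2) = nf g ^ ε := by
      rw [← Real.rpow_add (nf_pos g)]; congr 1; ring
    have h9 : lg g y ^ 2 * Real.exp |(-(δ * lg g y))| ≤ K * nf g ^ ε := by
      rw [← h8, ← mul_assoc, ← h7]
      exact mul_le_mul h6 h5 (Real.exp_pos _).le (by positivity)
    have h10 : (-(δ * lg g y)) ^ 2 * Real.exp |(-(δ * lg g y))| = δ ^ 2 * (lg g y ^ 2 * Real.exp |(-(δ * lg g y))|) := by ring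
    rw [h10] at h1
    have := mul_le_mul_of_nonneg_left h9 (sq_nonneg δ)
    linarith
  have hri : Integrable (fun g => 1 - δ * lg g y + δ ^ 2 * (K * nf g ^ ε)) (M μ N) :=
    ((integrable_const _).sub (hlgi.const_mul δ)).add ((hi.const_mul K).const_mul _)
  simp only [ep_eq_exp]
  calc ∫⁻ g, ENNReal.ofReal (Real.exp (-(δ * lg g y))) ∂(M μ N)
      ≤ ∫⁻ g, ENNReal.ofReal (1 - δ * lg g y + δ ^ 2 * (K * nf g ^ ε)) ∂(M μ N) :=
        lintegral_mono fun g => ENNReal.ofReal_le_ofReal (hpt g)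
    _ = ENNReal.ofReal (∫ g, (1 - δ * lg g y + δ ^ 2 * (K * nf g ^ ε)) ∂(M μ N)) :=
        (ofReal_integral_eq_lintegral_ofReal hri (ae_of_all _ fun g => (Real.exp_pos _).le.trans (hpt g))).symm
    _ ≤ _ := by
        apply ENNReal.ofReal_le_ofReal
        have e1 := integral_add ((integrable_const (μ := M μ N) (1:ℝ)).sub (hlgi.const_mul δ)) ((hi.const_mul K).const_mul (δ ^ 2))
        simp only [Pi.sub_apply] at e1
        rw [e1, integral_sub (integrable_const _) (hlgi.const_mul δ), integral_const_mul, integral_const_mul,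
          integral_const_mul]
        simp only [integral_const, probReal_univ, smul_eq_mul, mul_one]
        have h1 := hN y
        have h2 : K * ∫ g, nf g ^ ε ∂(M μ N) ≤ K * B := mul_le_mul_of_nonneg_left hintg hK0.le
        have h3 : δ * (2 * (K * B)) ≤ 1 := by rwa [le_div_iff₀ (by positivity)] at hδ3
        nlinarith [mul_le_mul_of_nonneg_left h2 (sq_nonneg δ)]

/-- exponential contraction -/
def Contr (μ : Measure SL2) (δ C ρ : ℝ) : Prop :=
  0 < δ ∧ δ ≤ 1 ∧ 1 ≤ C ∧ 0 < ρ ∧ ρ < 1 ∧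
    ∀ n, ∀ y : Y, ∫⁻ g, ep δ y g ∂(M μ n) ≤ ENNReal.ofReal (C * ρ ^ n)

theorem exists_contr {μ : Measure SL2} [IsProbabilityMeasure μ] (hz : ZariskiDense μ) {ε A : ℝ}
    (hm : Mom μ ε A) : ∃ δ C ρ, δ ≤ ε ∧ Contr μ δ C ρ := by
  obtain ⟨N, hN⟩ := exists_drift hz hm
  obtain ⟨δ, hδ0, hδε, hδ1, hstep⟩ := drift_step hm hN
  obtain ⟨hε, hA, h⟩ := hm
  set ρ0 := 1 - δ / 2 with hρ0
  have hρ0p : 0 < ρ0 := by rw [hρ0]; linarith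
  have hρ01 : ρ0 < 1 := by rw [hρ0]; linarith
  have hpow : ∀ q r : ℕ, ∀ y : Y, ∫⁻ g, ep δ y g ∂(M μ (q * (N + 1) + r)) ≤ ENNReal.ofReal (ρ0 ^ q * A ^ (r + 1)) := by
    intro q r
    induction q with
    | zero =>
      intro y
      rw [zero_mul, zero_add, pow_zero, one_mul]
      exact (lintegral_mono fun g => ep_le hδ0.le hδε y g).trans (h r)
    | succ q ih =>
      intro y
      have e : (q + 1) * (N + 1) + r = (N + 1) + (q * (N + 1) + r) := by ring
      rw [e]
      refine (ep_submul δ _ _ _ hstep y).trans ?_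
      rw [pow_succ', mul_assoc, ENNReal.ofReal_mul hρ0p.le]
      gcongr
      exact ih y
  set ρ := ρ0 ^ ((1 : ℝ) / (N + 1)) with hρ
  have hρp : 0 < ρ := Real.rpow_pos_of_pos hρ0p _
  have hρ1 : ρ < 1 := Real.rpow_lt_one hρ0p.le hρ01 (by positivity)
  have hρN : ρ ^ (N + 1) = ρ0 := by
    rw [hρ, ← Real.rpow_natCast, ← Real.rpow_mul hρ0p.le]
    have : (1 : ℝ) / (N + 1) * ((N + 1 : ℕ) : ℝ) = 1 := by push_cast; field_simp
    rw [this, Real.rpow_one]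
  have hC1 : 1 ≤ A ^ (N + 1) := one_le_pow₀ hA
  refine ⟨δ, A ^ (N + 1) / ρ0, ρ, hδε, hδ0, hδ1, ?_, hρp, hρ1, ?_⟩
  · rw [le_div_iff₀ hρ0p]; linarith
  · intro n y
    have e := Nat.div_add_mod' n (N + 1)
    have hr : n % (N + 1) < N + 1 := Nat.mod_lt _ (Nat.succ_pos N)
    set q := n / (N + 1)
    set r := n % (N + 1)
    have h1 := hpow q r y
    rw [e] at h1
    refine h1.trans (ENNReal.ofReal_le_ofReal ?_)
    have h2 : A ^ (r + 1) ≤ A ^ (N + 1) := pow_le_pow_right₀ hA (by omega)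
    have h3 : ρ0 ^ q ≤ ρ ^ n / ρ0 := by
      rw [le_div_iff₀ hρ0p, ← pow_succ, ← hρN, ← pow_mul]
      apply pow_le_pow_of_le_one hρp.le hρ1.le
      have : (N + 1) * (q + 1) = q * (N + 1) + (N + 1) := by ring
      omega
    calc ρ0 ^ q * A ^ (r + 1) ≤ (ρ ^ n / ρ0) * A ^ (N + 1) := by
          apply mul_le_mul h3 h2 (by positivity) (by positivity)
      _ = _ := by ring

/-- the inverse measure satisfies the same hypotheses -/
lemma zd_inv {μ : Measure SL2} [IsProbabilityMeasure μ] (hz : ZariskiDense μ) :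
    ZariskiDense (μ.map (·⁻¹)) := by
  intro hs
  apply hz
  have : Subgroup.closure (measSupp μ) ≤ Subgroup.closure (measSupp (μ.map (·⁻¹))) := by
    rw [Subgroup.closure_le]
    intro g hg
    rw [SetLike.mem_coe, ← inv_mem_iff]
    apply Subgroup.subset_closure
    intro U hU hgU
    rw [Measure.map_apply measurable_inv hU.measurableSet]
    exact hg _ (hU.preimage continuous_inv) hgU
  have hs' : Group.IsSolvable (Subgroup.closure (measSupp (μ.map (·⁻¹)))) := hs
  exact Group.isSolvable_of_isSolvable_injective (f := Subgroup.inclusion this) (Subgroup.inclusion_injective this)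

lemma mom_inv {μ : Measure SL2} [IsProbabilityMeasure μ] {ε A : ℝ} (hm : Mom μ ε A) :
    Mom (μ.map (·⁻¹)) ε A := by
  refine ⟨hm.1, hm.2.1, fun n => ?_⟩
  rw [M_map_inv, lintegral_map (meas_nf_rpow ε) measurable_inv]
  simp only [nf_inv]
  exact hm.2.2 n

lemma contr_inv {μ : Measure SL2} [IsProbabilityMeasure μ] {δ C ρ : ℝ} (h : Contr (μ.map (·⁻¹)) δ C ρ)
    (n : ℕ) (y : Y) : ∫⁻ g, ep δ y g⁻¹ ∂(M μ n) ≤ ENNReal.ofReal (C * ρ ^ n) := by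
  have := h.2.2.2.2.2 n y
  rwa [M_map_inv, lintegral_map (meas_ep δ y) measurable_inv] at this


/-- singular kernel on the circle -/
def Ph (ε : ℝ) (z w : Y) : ENNReal := (ENNReal.ofReal |dt z w|) ^ (-ε)

lemma cont_dtYY : Continuous fun p : Y × Y => dt p.1 p.2 :=
  cont_dt.comp (Continuous.prodMk (continuous_subtype_val.comp continuous_fst)
    (continuous_subtype_val.comp continuous_snd))

lemma meas_Ph (ε : ℝ) : Measurable fun p : Y × Y => Ph ε p.1 p.2 :=
  (ENNReal.measurable_ofReal.comp cont_dtYY.abs.measurable).pow_const _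

lemma Ph_ineq {ε : ℝ} (hε : 0 < ε) (hε1 : ε ≤ 1) (h : SL2) (z w : Y) :
    Ph ε (ac h⁻¹ z) w ≤ ep (2 * ε) w h * Ph ε z (ac h w) + ENNReal.ofReal (nf h ^ (2 * ε)) := by
  have hU := mv_pos h w
  have hV := mv_pos h⁻¹ z
  have hn := nf_pos h
  set U := enorm2 (mv h w) with hUd
  set V := enorm2 (mv h⁻¹ z) with hVd
  set D := |dt z (mv h w)| with hD
  have e1 : |dt (ac h⁻¹ z) w| = D / V := by
    rw [ac, dt_smul_left, dt_inv, abs_mul, abs_of_pos (inv_pos.2 hV)]; ring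
  have e2 : |dt z (ac h w)| = D / U := by
    rw [ac, dt_smul_right, abs_mul, abs_of_pos (inv_pos.2 hU)]; ring
  have hD0 : 0 ≤ D := abs_nonneg _
  unfold Ph
  rw [e1, e2]
  rcases hD0.eq_or_lt with h0 | h0
  · rw [← h0]
    simp only [zero_div, ENNReal.ofReal_zero]
    have hne : ep (2 * ε) w h ≠ 0 := by
      unfold ep
      have := Real.rpow_pos_of_pos hU (-(2 * ε))
      exact (ENNReal.ofReal_pos.2 this).ne'
    rw [ENNReal.zero_rpow_of_neg (by linarith), ENNReal.mul_top hne, top_add]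
  · unfold ep
    rw [ENNReal.ofReal_rpow_of_pos (by positivity), ENNReal.ofReal_rpow_of_pos (by positivity),
      ← ENNReal.ofReal_mul (by positivity), ← ENNReal.ofReal_add (by positivity) (by positivity)]
    apply ENNReal.ofReal_le_ofReal
    have h1 := contract_ineq h z w (ne_zero_of_unit w.2)
    rw [z.2, w.2, mul_one] at h1
    have h2 := enorm2_le_mv h w
    rw [w.2] at h2
    have h3 : V / D ≤ 1 / (U * D) + nf h ^ 2 := by
      have : V / D ≤ 1 / (U * D) + nf h / U := by
        rw [div_add_div _ _ (by positivity) (by positivity), div_le_div_iff₀ h0 (by positivity)]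
        nlinarith [mul_le_mul_of_nonneg_right h1 (by positivity : 0 ≤ U * D)]
      have h4 : nf h / U ≤ nf h ^ 2 := by
        rw [div_le_iff₀ hU]
        nlinarith
      linarith
    have h5 : (D / V) ^ (-ε) = (V / D) ^ ε := by
      rw [Real.rpow_neg (by positivity), ← Real.inv_rpow (by positivity), inv_div]
    have h6 : (D / U) ^ (-ε) = (U / D) ^ ε := by
      rw [Real.rpow_neg (by positivity), ← Real.inv_rpow (by positivity), inv_div]
    have h7 : U ^ (-(2 * ε)) = (1 / U ^ 2) ^ ε := by
      rw [Real.rpow_neg hU.le, ← Real.inv_rpow hU.le, Real.rpow_mul (by positivity)]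
      congr 1
      rw [Real.rpow_two, one_div, inv_pow]
    have h8 : nf h ^ (2 * ε) = (nf h ^ 2) ^ ε := by
      rw [Real.rpow_mul hn.le, Real.rpow_two]
    change (D / V) ^ (-ε) ≤ U ^ (-(2 * ε)) * (D / U) ^ (-ε) + nf h ^ (2 * ε)
    rw [h5, h6, h7, h8, ← Real.mul_rpow (by positivity) (by positivity)]
    have h9 : 1 / U ^ 2 * (U / D) = 1 / (U * D) := by field_simp
    rw [h9]
    calc (V / D) ^ ε ≤ (1 / (U * D) + nf h ^ 2) ^ ε := Real.rpow_le_rpow (by positivity) h3 hε.le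
      _ ≤ _ := Real.rpow_add_le_add_rpow (by positivity) (by positivity) hε.le hε1

/-- the one-dimensional singular integral -/
def Js (ε : ℝ) : ENNReal := ∫⁻ x in Set.Ioo (-1 : ℝ) 1, (ENNReal.ofReal |x|) ^ (-ε)

lemma Js_lt {ε : ℝ} (hε1 : ε < 1) : Js ε < ⊤ := by
  set F : ℝ → ENNReal := fun x => (ENNReal.ofReal |x|) ^ (-ε) with hF
  have hpos : ∫⁻ x in Set.Ioo (0 : ℝ) 1, F x < ⊤ := by
    have h1 := (intervalIntegral.integrableOn_Ioo_rpow_iff (s := -ε) one_pos).2 (by linarith)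
    have h2 : ∫⁻ x in Set.Ioo (0 : ℝ) 1, F x = ∫⁻ x in Set.Ioo (0 : ℝ) 1, ENNReal.ofReal (x ^ (-ε)) := by
      apply setLIntegral_congr_fun measurableSet_Ioo
      intro x hx
      simp only [hF]
      rw [abs_of_pos hx.1, ENNReal.ofReal_rpow_of_pos hx.1]
    rw [h2]
    have h3 := h1.2
    rw [hasFiniteIntegral_iff_ofReal] at h3
    · exact h3
    · exact (ae_restrict_mem measurableSet_Ioo).mono fun x hx => Real.rpow_nonneg hx.1.le _
  have hneg : ∫⁻ x in Set.Ioo (-1 : ℝ) 0, F x = ∫⁻ x in Set.Ioo (0 : ℝ) 1, F x := by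
    have := (Measure.measurePreserving_neg (volume : Measure ℝ)).setLIntegral_comp_preimage
      (s := Set.Ioo (0 : ℝ) 1) measurableSet_Ioo (f := F)
      ((ENNReal.measurable_ofReal.comp continuous_abs.measurable).pow_const _)
    rw [← this]
    have hs : Neg.neg ⁻¹' Set.Ioo (0 : ℝ) 1 = Set.Ioo (-1) 0 := by
      ext x; simp only [Set.mem_preimage, Set.mem_Ioo]; constructor <;> rintro ⟨a, b⟩ <;> constructor <;> linarith
    rw [hs]
    simp only [hF, abs_neg]
  have hsub : Set.Ioo (-1 : ℝ) 1 ⊆ Set.Ioo (-1) 0 ∪ (Set.Ioo 0 1 ∪ {0}) := by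
    rintro x ⟨a, b⟩
    rcases lt_trichotomy x 0 with h | h | h
    · exact Or.inl ⟨a, h⟩
    · exact Or.inr (Or.inr h)
    · exact Or.inr (Or.inl ⟨h, b⟩)
  calc Js ε ≤ ∫⁻ x in Set.Ioo (-1) 0 ∪ (Set.Ioo 0 1 ∪ {0}), F x := lintegral_mono_set hsub
    _ ≤ (∫⁻ x in Set.Ioo (-1) 0, F x) + ((∫⁻ x in Set.Ioo 0 1, F x) + ∫⁻ x in {0}, F x) :=
        (lintegral_union_le _ _ _).trans (add_le_add le_rfl (lintegral_union_le _ _ _))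
    _ < ⊤ := by
        rw [hneg]
        have : ∫⁻ x in ({0} : Set ℝ), F x = 0 := by
          rw [Measure.restrict_singleton]; simp
        rw [this, add_zero]
        exact ENNReal.add_lt_top.2 ⟨hpos, hpos⟩

lemma shift_int {ε : ℝ} (hε : 0 < ε) (c : ℝ) :
    ∫⁻ τ in Set.Icc (0 : ℝ) 1, (ENNReal.ofReal |τ - c|) ^ (-ε) ≤ 1 + Js ε := by
  set F : ℝ → ENNReal := fun x => (ENNReal.ofReal |x|) ^ (-ε) with hF
  have hpt : ∀ τ, F (τ - c) ≤ 1 + (Set.Ioo (-1 : ℝ) 1).indicator F (τ - c) := by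
    intro τ
    by_cases h : τ - c ∈ Set.Ioo (-1 : ℝ) 1
    · rw [Set.indicator_of_mem h]; exact le_add_self
    · rw [Set.indicator_of_notMem h, add_zero]
      have h1 : 1 ≤ |τ - c| := by
        by_contra h2
        exact h (abs_lt.1 (not_le.1 h2))
      simp only [hF]
      rw [ENNReal.rpow_neg]
      apply ENNReal.inv_le_one.2
      apply ENNReal.one_le_rpow _ hε
      exact ENNReal.one_le_ofReal.2 h1
  calc ∫⁻ τ in Set.Icc (0 : ℝ) 1, F (τ - c)
      ≤ ∫⁻ τ in Set.Icc (0 : ℝ) 1, (1 + (Set.Ioo (-1 : ℝ) 1).indicator F (τ - c)) := lintegral_mono hpt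
    _ = 1 + ∫⁻ τ in Set.Icc (0 : ℝ) 1, (Set.Ioo (-1 : ℝ) 1).indicator F (τ - c) := by
        rw [lintegral_add_left measurable_const]; simp
    _ ≤ 1 + ∫⁻ τ, (Set.Ioo (-1 : ℝ) 1).indicator F (τ - c) := by
        gcongr; exact Measure.restrict_le_self
    _ = _ := by
        rw [lintegral_sub_right_eq_self (fun x => (Set.Ioo (-1 : ℝ) 1).indicator F x) c,
          lintegral_indicator measurableSet_Ioo]
        rfl

/-- a curve on the circle -/
def crv (τ : ℝ) : Y := ⟨(enorm2 ![1, τ])⁻¹ • ![1, τ], unit_normalize (by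
  intro h; simpa using congrFun h 0)⟩

lemma cont_crv : Continuous crv := by
  apply Continuous.subtype_mk
  have h : Continuous fun τ : ℝ => (![1, τ] : Fin 2 → ℝ) := by
    apply continuous_pi
    intro i
    fin_cases i
    · exact continuous_const
    · exact continuous_id
  refine ((cont_enorm2.comp h).inv₀ ?_).smul h
  intro τ
  exact (enorm2_pos (by intro h; simpa using congrFun h 0)).ne'

/-- the smooth initial distribution -/
def lam : Measure Y := (volume.restrict (Set.Icc (0 : ℝ) 1)).map crv

instance lam_prob : IsProbabilityMeasure lam := by
  have : IsProbabilityMeasure (volume.restrict (Set.Icc (0 : ℝ) 1)) := ⟨by simp⟩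
  exact Measure.isProbabilityMeasure_map cont_crv.aemeasurable

lemma lam_bound {ε : ℝ} (hε : 0 < ε) (w : Y) :
    ∫⁻ y, Ph ε y w ∂lam ≤ (ENNReal.ofReal (1 / 8)) ^ (-ε) * (1 + Js ε) := by
  have hm : Measurable fun y : Y => Ph ε y w := (meas_Ph ε).comp (measurable_id.prodMk measurable_const)
  unfold lam
  rw [lintegral_map hm cont_crv.measurable]
  have hw2 := enorm2_sq (w : Fin 2 → ℝ)
  rw [w.2] at hw2
  set a := (w : Fin 2 → ℝ) 0 with ha
  set b := (w : Fin 2 → ℝ) 1 with hb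
  have hd : ∀ τ ∈ Set.Icc (0:ℝ) 1, |b - τ * a| / 2 ≤ |dt (crv τ) w| := by
    intro τ hτ
    have hp : 0 < enorm2 ![1, τ] := enorm2_pos (by intro h; simpa using congrFun h 0)
    have h2 : enorm2 ![1, τ] ≤ 2 := by
      apply abs_le_of_sq_le_sq' _ (by norm_num) |>.2
      rw [enorm2_sq]; simp; nlinarith [hτ.1, hτ.2]
    have e : |dt (crv τ) w| = (enorm2 ![1, τ])⁻¹ * |b - τ * a| := by
      rw [crv, dt_smul_left, abs_mul, abs_of_pos (inv_pos.2 hp)]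
      congr 2; simp [dt, ha, hb]
    rw [e, div_eq_inv_mul]
    exact mul_le_mul_of_nonneg_right (inv_anti₀ hp h2) (abs_nonneg _)
  have mono : ∀ x y : ENNReal, x ≤ y → y ^ (-ε) ≤ x ^ (-ε) := by
    intro x y hxy
    rw [ENNReal.rpow_neg, ENNReal.rpow_neg]
    exact ENNReal.inv_le_inv.2 (ENNReal.rpow_le_rpow hxy hε.le)
  have gen : ∀ f : ℝ → ℝ, (∀ τ ∈ Set.Icc (0:ℝ) 1, (1 / 8) * f τ ≤ |dt (crv τ) w|) → Measurable f →
      ∫⁻ τ in Set.Icc (0:ℝ) 1, Ph ε (crv τ) w ≤ (ENNReal.ofReal (1 / 8)) ^ (-ε) * ∫⁻ τ in Set.Icc (0:ℝ) 1, (ENNReal.ofReal (f τ)) ^ (-ε) := by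
    intro f hf hfm
    have hgm : Measurable fun τ => (ENNReal.ofReal (f τ)) ^ (-ε) := hfm.ennreal_ofReal.pow_const _
    rw [← lintegral_const_mul _ hgm]
    apply setLIntegral_mono
    · exact hgm.const_mul _
    · intro τ hτ
      rw [← ENNReal.mul_rpow_of_ne_top ENNReal.ofReal_ne_top ENNReal.ofReal_ne_top, ← ENNReal.ofReal_mul (by norm_num)]
      exact mono _ _ (ENNReal.ofReal_le_ofReal (hf τ hτ))
  by_cases hab : 1 / 2 ≤ |a|
  · have ha0 : a ≠ 0 := by intro h; rw [h, abs_zero] at hab; norm_num at hab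
    refine (gen (fun τ => |τ - b / a|) ?_ (by fun_prop)).trans ?_
    · intro τ hτ
      refine le_trans ?_ (hd τ hτ)
      have : |b - τ * a| = |a| * |τ - b / a| := by
        rw [← abs_mul, ← abs_neg]; congr 1; field_simp; ring
      rw [this]
      nlinarith [abs_nonneg (τ - b / a)]
    · gcongr
      exact shift_int hε _
  · push Not at hab
    refine (gen (fun τ => 1) ?_ measurable_const).trans ?_
    · intro τ hτ
      refine le_trans ?_ (hd τ hτ)
      have h1 : 3 / 4 ≤ |b| := by
        by_contra h
        push Not at h
        have : b ^ 2 < (3/4) ^ 2 := by rw [← sq_abs]; exact pow_lt_pow_left₀ h (abs_nonneg _) (by norm_num)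
        have : a ^ 2 < (1/2) ^ 2 := by rw [← sq_abs a]; exact pow_lt_pow_left₀ hab (abs_nonneg _) (by norm_num)
        linarith
      have h2 := abs_sub_abs_le_abs_sub b (τ * a)
      have h3 : |τ * a| ≤ 1 / 2 := by
        rw [abs_mul, abs_of_nonneg hτ.1]
        nlinarith [hτ.1, hτ.2, abs_nonneg a]
      linarith
    · gcongr
      simp

/-- averaged regularity functional -/
def Bf (μ : Measure SL2) (ε : ℝ) (m : ℕ) (w : Y) : ENNReal :=
  ∫⁻ y, ∫⁻ g, Ph ε (ac g⁻¹ y) w ∂(M μ m) ∂lam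

lemma cont_acinv : Continuous fun p : SL2 × Y => ac p.1⁻¹ p.2 :=
  Continuous.comp (f := fun p : SL2 × Y => (p.1⁻¹, p.2)) (g := fun p : SL2 × Y => ac p.1 p.2) cont_ac
    (Continuous.prodMk (continuous_fst.inv) continuous_snd)

lemma meas_Bker (ε : ℝ) (w : Y) : Measurable fun p : SL2 × Y => Ph ε (ac p.1⁻¹ p.2) w :=
  Measurable.comp (g := fun p : Y × Y => Ph ε p.1 p.2) (f := fun p : SL2 × Y => (ac p.1⁻¹ p.2, w)) (meas_Ph ε)
    (cont_acinv.measurable.prodMk measurable_const)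

lemma meas_Bker1 (ε : ℝ) (y w : Y) : Measurable fun g : SL2 => Ph ε (ac g⁻¹ y) w :=
  Measurable.comp (g := fun p : SL2 × Y => Ph ε (ac p.1⁻¹ p.2) w) (f := fun g : SL2 => (g, y)) (meas_Bker ε w)
    (measurable_id.prodMk measurable_const)

lemma meas_Bker3 (ε : ℝ) (w : Y) :
    Measurable fun q : (Y × SL2) × SL2 => Ph ε (ac (q.2 * q.1.2)⁻¹ q.1.1) w :=
  Measurable.comp (g := fun p : SL2 × Y => Ph ε (ac p.1⁻¹ p.2) w)
    (f := fun q : (Y × SL2) × SL2 => (q.2 * q.1.2, q.1.1)) (meas_Bker ε w)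
    ((measurable_snd.mul measurable_fst.snd).prodMk measurable_fst.fst)

lemma Bf_lin {μ : Measure SL2} [IsProbabilityMeasure μ] (ε : ℝ) (m : ℕ) (w : Y) (a b : ENNReal) :
    ∫⁻ y, ∫⁻ g, (a * Ph ε (ac g⁻¹ y) w + b) ∂(M μ m) ∂lam = a * Bf μ ε m w + b := by
  unfold Bf
  have h1 : ∀ y : Y, ∫⁻ g, (a * Ph ε (ac g⁻¹ y) w + b) ∂(M μ m)
      = a * (∫⁻ g, Ph ε (ac g⁻¹ y) w ∂(M μ m)) + b := by
    intro y
    rw [lintegral_add_right _ measurable_const, lintegral_const_mul _ (meas_Bker1 ε y w)]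
    simp
  have h2 : Measurable fun y : Y => ∫⁻ g, Ph ε (ac g⁻¹ y) w ∂(M μ m) :=
    (meas_Bker ε w).lintegral_prod_left'
  simp only [h1]
  rw [lintegral_add_right _ measurable_const, lintegral_const_mul _ h2]
  simp

lemma Bf_swap {μ : Measure SL2} [IsProbabilityMeasure μ] (ε : ℝ) (m k : ℕ) (w : Y) :
    Bf μ ε (m + k) w = ∫⁻ h, ∫⁻ y, ∫⁻ g, Ph ε (ac (g * h)⁻¹ y) w ∂(M μ m) ∂lam ∂(M μ k) := by
  have e : Bf μ ε (m + k) w = ∫⁻ y, ∫⁻ h, ∫⁻ g, Ph ε (ac (g * h)⁻¹ y) w ∂(M μ m) ∂(M μ k) ∂lam := by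
    unfold Bf
    apply lintegral_congr; intro y
    exact lint_add' μ m k (meas_Bker1 ε y w)
  rw [e]
  have h2 : Measurable fun p : Y × SL2 => ∫⁻ g, Ph ε (ac (g * p.2)⁻¹ p.1) w ∂(M μ m) :=
    (meas_Bker3 ε w).lintegral_prod_right'
  exact lintegral_lintegral_swap (f := fun y h => ∫⁻ g, Ph ε (ac (g * h)⁻¹ y) w ∂(M μ m)) h2.aemeasurable

lemma Bf_step {μ : Measure SL2} [IsProbabilityMeasure μ] {ε0 A : ℝ} (hm : Mom μ ε0 A) {δ C ρ : ℝ}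
    (hδ : δ ≤ ε0) (hc : Contr μ δ C ρ) (m k : ℕ) (β : ENNReal) (hβ : ∀ w, Bf μ (δ / 2) m w ≤ β) (w : Y) :
    Bf μ (δ / 2) (m + k) w ≤ ENNReal.ofReal (C * ρ ^ k) * β + ENNReal.ofReal (A ^ (k + 1)) := by
  obtain ⟨hδ0, hδ1, hC1, hρ0, hρ1, hcon⟩ := hc
  have e2 : 2 * (δ / 2) = δ := by ring
  have hpt : ∀ h : SL2, ∫⁻ y, ∫⁻ g, Ph (δ / 2) (ac (g * h)⁻¹ y) w ∂(M μ m) ∂lam ≤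
      ep δ w h * β + ENNReal.ofReal (nf h ^ ε0) := by
    intro h
    calc ∫⁻ y, ∫⁻ g, Ph (δ / 2) (ac (g * h)⁻¹ y) w ∂(M μ m) ∂lam
        ≤ ∫⁻ y, ∫⁻ g, (ep δ w h * Ph (δ / 2) (ac g⁻¹ y) (ac h w) + ENNReal.ofReal (nf h ^ ε0)) ∂(M μ m) ∂lam := by
          apply lintegral_mono; intro y; beta_reduce
          apply lintegral_mono; intro g; beta_reduce
          rw [mul_inv_rev, ac_mul]
          refine (Ph_ineq (by linarith) (by linarith) h _ w).trans ?_
          rw [e2]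
          gcongr
          · exact one_le_nf h
      _ = ep δ w h * Bf μ (δ / 2) m (ac h w) + ENNReal.ofReal (nf h ^ ε0) := Bf_lin _ _ _ _ _
      _ ≤ _ := by gcongr; exact hβ _
  rw [Bf_swap]
  calc ∫⁻ h, ∫⁻ y, ∫⁻ g, Ph (δ / 2) (ac (g * h)⁻¹ y) w ∂(M μ m) ∂lam ∂(M μ k)
    _ ≤ ∫⁻ h, (ep δ w h * β + ENNReal.ofReal (nf h ^ ε0)) ∂(M μ k) := lintegral_mono hpt
    _ = (∫⁻ h, ep δ w h ∂(M μ k)) * β + ∫⁻ h, ENNReal.ofReal (nf h ^ ε0) ∂(M μ k) := by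
        rw [lintegral_add_right _ (meas_nf_rpow ε0), lintegral_mul_const _ (meas_ep δ w)]
    _ ≤ _ := by
        gcongr
        · exact hcon k w
        · exact hm.2.2 k

theorem exists_regular {μ : Measure SL2} [IsProbabilityMeasure μ] {ε0 A : ℝ} (hm : Mom μ ε0 A) {δ C ρ : ℝ}
    (hδ : δ ≤ ε0) (hc : Contr μ δ C ρ) : ∃ K : ℝ, 0 ≤ K ∧ ∀ (m : ℕ) (w : Y), ∃ y0 : Y,
      ∫⁻ g, Ph (δ / 2) (ac g⁻¹ y0) w ∂(M μ m) ≤ ENNReal.ofReal K := by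
  have hstep := Bf_step hm hδ hc
  obtain ⟨hδ0, hδ1, hC1, hρ0, hρ1, hcon⟩ := hc
  obtain ⟨hε, hA, hmo⟩ := hm
  set C0 : ENNReal := (ENNReal.ofReal (1 / 8)) ^ (-(δ / 2)) * (1 + Js (δ / 2)) with hC0
  have hC0t : C0 < ⊤ := by
    apply ENNReal.mul_lt_top
    · rw [ENNReal.ofReal_rpow_of_pos (by norm_num)]; exact ENNReal.ofReal_lt_top
    · exact ENNReal.add_lt_top.2 ⟨ENNReal.one_lt_top, Js_lt (by linarith)⟩
  have h0 : ∀ w, Bf μ (δ / 2) 0 w ≤ C0 := by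
    intro w
    unfold Bf
    refine le_trans (le_of_eq ?_) (lam_bound (by linarith) w)
    apply lintegral_congr; intro y
    rw [M, lintegral_dirac' _ (meas_Bker1 (δ / 2) y w)]
    rw [inv_one, ac_one]
  obtain ⟨N0, hN0⟩ : ∃ N0 : ℕ, C * ρ ^ (N0 + 1) ≤ 1 / 2 := by
    have := (tendsto_pow_atTop_nhds_zero_of_lt_one hρ0.le hρ1).const_mul C
    rw [mul_zero] at this
    obtain ⟨n, hn⟩ := (this.eventually (gt_mem_nhds (by norm_num : (0:ℝ) < 1/2))).exists
    refine ⟨n, ?_⟩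
    rw [pow_succ]
    have : ρ ^ n * ρ ≤ ρ ^ n := mul_le_of_le_one_right (by positivity) hρ1.le
    nlinarith
  set D : ENNReal := ENNReal.ofReal C * C0 + ENNReal.ofReal (A ^ (N0 + 2)) with hD
  have hDt : D < ⊤ := ENNReal.add_lt_top.2 ⟨ENNReal.mul_lt_top ENNReal.ofReal_lt_top hC0t, ENNReal.ofReal_lt_top⟩
  have hall : ∀ m, ∀ w, Bf μ (δ / 2) m w ≤ 2 * D := by
    intro m
    induction m using Nat.strong_induction_on with
    | _ m ih =>
      intro w
      by_cases hmN : m ≤ N0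
      · have := hstep 0 m C0 h0 w
        rw [zero_add] at this
        refine this.trans (le_trans ?_ (le_mul_of_one_le_left zero_le (by norm_num : (1:ENNReal) ≤ 2)))
        rw [hD]
        refine add_le_add (mul_le_mul' (ENNReal.ofReal_le_ofReal ?_) le_rfl)
          (ENNReal.ofReal_le_ofReal (pow_le_pow_right₀ hA (by omega)))
        have : ρ ^ m ≤ 1 := pow_le_one₀ hρ0.le hρ1.le
        nlinarith
      · have hlt : m - (N0 + 1) < m := by omega
        have := hstep (m - (N0 + 1)) (N0 + 1) _ (ih _ hlt) w
        rw [Nat.sub_add_cancel (by omega)] at this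
        refine this.trans ?_
        calc ENNReal.ofReal (C * ρ ^ (N0 + 1)) * (2 * D) + ENNReal.ofReal (A ^ (N0 + 1 + 1))
            ≤ ENNReal.ofReal (1 / 2) * (2 * D) + D := by
              gcongr
              exact le_add_self
          _ = 2 * D := by
              rw [← mul_assoc]
              have : ENNReal.ofReal (1 / 2) * 2 = 1 := by
                rw [← ENNReal.ofReal_ofNat 2, ← ENNReal.ofReal_mul (by norm_num)]; norm_num
              rw [this, one_mul, two_mul]
  have h2D : 2 * D < ⊤ := ENNReal.mul_lt_top (by simp) hDt
  refine ⟨(2 * D).toReal, ENNReal.toReal_nonneg, fun m w => ?_⟩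
  rw [ENNReal.ofReal_toReal h2D.ne]
  have hmeas : Measurable fun y : Y => ∫⁻ g, Ph (δ / 2) (ac g⁻¹ y) w ∂(M μ m) :=
    (meas_Bker (δ / 2) w).lintegral_prod_left'
  obtain ⟨y0, hy0⟩ := exists_le_lintegral (μ := lam) hmeas.aemeasurable
  exact ⟨y0, hy0.trans (hall m w)⟩


lemma markov_gen {α : Type*} [MeasurableSpace α] (ν : Measure α) {S : Set α} (hS : MeasurableSet S)
    {f : α → ENNReal} (hf : Measurable f) (c : ENNReal) (h : ∀ g ∈ S, 1 ≤ c * f g) :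
    ν S ≤ c * ∫⁻ g, f g ∂ν := by
  rw [← lintegral_const_mul _ hf, ← lintegral_indicator_one hS]
  apply lintegral_mono
  intro g
  by_cases hg : g ∈ S
  · rw [Set.indicator_of_mem hg]; exact h g hg
  · rw [Set.indicator_of_notMem hg]; exact zero_le

lemma cont_lgl (y : Y) : Continuous fun g : SL2 => lg g y := cont_lg_left y

lemma low_dev {μ : Measure SL2} [IsProbabilityMeasure μ] {δ C ρ : ℝ} (hc : Contr μ δ C ρ) (n : ℕ) (y : Y) (b : ℝ) :
    M μ n {g | lg g y ≤ b} ≤ ENNReal.ofReal (C * ρ ^ n * Real.exp (δ * b)) := by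
  obtain ⟨hδ0, hδ1, hC1, hρ0, hρ1, hcon⟩ := hc
  have h1 := markov_gen (M μ n) (S := {g | lg g y ≤ b}) (isClosed_le (cont_lgl y) continuous_const).measurableSet
    (meas_ep δ y) (ENNReal.ofReal (Real.exp (δ * b))) (by
      intro g hg
      have hg' : lg g y ≤ b := hg
      rw [ep_eq_exp, ← ENNReal.ofReal_mul (Real.exp_pos _).le, ← Real.exp_add]
      apply ENNReal.one_le_ofReal.2
      apply Real.one_le_exp
      nlinarith)
  refine h1.trans ?_
  rw [mul_comm (C * ρ ^ n), ENNReal.ofReal_mul (Real.exp_pos _).le]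
  gcongr
  exact hcon n y

lemma geo_tail {ρ : ℝ} (h0 : 0 < ρ) (h1 : ρ < 1) {c : ℝ} (hc : 0 ≤ c) :
    ∑' n : ℕ, ENNReal.ofReal (c * ρ ^ n) = ENNReal.ofReal (c / (1 - ρ)) := by
  rw [← ENNReal.ofReal_tsum_of_nonneg (fun n => by positivity)
    ((summable_geometric_of_lt_one h0.le h1).mul_left c), tsum_mul_left, tsum_geometric_of_lt_one h0.le h1]
  rfl

lemma geo_min {δ C ρ : ℝ} (hδ0 : 0 < δ) (hC : 1 ≤ C) (h0 : 0 < ρ) (h1 : ρ < 1) :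
    ∃ B : ℝ, 0 < B ∧ ∀ a : ℝ, 0 ≤ a → ∀ f : ℕ → ENNReal, (∀ n, f n ≤ 1) →
      (∀ n, f n ≤ ENNReal.ofReal (C * ρ ^ n * Real.exp (δ * a))) →
      ∑' n, f n ≤ ENNReal.ofReal (B * (1 + a)) := by
  have hl : 0 < -Real.log ρ := by have := Real.log_neg h0 h1; linarith
  have hlC : 0 ≤ Real.log C := Real.log_nonneg hC
  have h1r : 0 < 1 / (1 - ρ) := by apply one_div_pos.2; linarith
  refine ⟨(Real.log C + δ) / (-Real.log ρ) + 1 + 1 / (1 - ρ), by positivity, fun a ha f hf1 hf2 => ?_⟩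
  obtain ⟨q, hq⟩ : ∃ q, q = (Real.log C + δ * a) / (-Real.log ρ) := ⟨_, rfl⟩
  obtain ⟨n0, hn0⟩ : ∃ n0, n0 = ⌈q⌉₊ := ⟨_, rfl⟩
  have hq0 : 0 ≤ q := by rw [hq]; positivity
  have hn1 : q ≤ n0 := by rw [hn0]; exact Nat.le_ceil q
  have hn2 : (n0 : ℝ) ≤ q + 1 := by rw [hn0]; exact (Nat.ceil_lt_add_one hq0).le
  have key : C * ρ ^ n0 * Real.exp (δ * a) ≤ 1 := by
    have e1 : C = Real.exp (Real.log C) := (Real.exp_log (by linarith)).symm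
    have e2 : ρ ^ n0 = Real.exp (n0 * Real.log ρ) := by rw [mul_comm, Real.exp_mul, Real.exp_log h0, Real.rpow_natCast]
    rw [e1, e2, ← Real.exp_add, ← Real.exp_add]
    apply Real.exp_le_one_iff.2
    have : Real.log C + δ * a = q * (-Real.log ρ) := by rw [hq]; exact (div_mul_cancel₀ _ hl.ne').symm
    have := mul_le_mul_of_nonneg_right hn1 hl.le
    linarith
  rw [← ENNReal.summable.sum_add_tsum_nat_add' (f := f) (k := n0)]
  calc (∑ i ∈ Finset.range n0, f i) + ∑' i, f (i + n0)
      ≤ (∑ i ∈ Finset.range n0, 1) + ∑' i : ℕ, ENNReal.ofReal (1 * ρ ^ i) := by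
        refine add_le_add (Finset.sum_le_sum fun i _ => hf1 i) (ENNReal.tsum_le_tsum fun i => ?_)
        refine (hf2 _).trans (ENNReal.ofReal_le_ofReal ?_)
        calc C * ρ ^ (i + n0) * Real.exp (δ * a) = (C * ρ ^ n0 * Real.exp (δ * a)) * ρ ^ i := by ring
          _ ≤ 1 * ρ ^ i := mul_le_mul_of_nonneg_right key (by positivity)
    _ = ENNReal.ofReal (n0 + 1 / (1 - ρ)) := by
        rw [geo_tail h0 h1 zero_le_one, ENNReal.ofReal_add (by positivity) h1r.le]
        simp
    _ ≤ _ := by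
        apply ENNReal.ofReal_le_ofReal
        have : q ≤ (Real.log C + δ) / (-Real.log ρ) * (1 + a) := by
          rw [hq, div_mul_eq_mul_div]
          apply div_le_div_of_nonneg_right _ hl.le
          nlinarith
        nlinarith [mul_nonneg h1r.le ha]

/-- events of the scalar part -/
def Ev (a r : ℝ) (y : Y) : Set SL2 := {g | lg g y + r ∈ Set.Icc 0 a}

lemma meas_Ev (a r : ℝ) (y : Y) : MeasurableSet (Ev a r y) :=
  (isClosed_Icc.preimage ((cont_lgl y).add continuous_const)).measurableSet

lemma Ev_mul (a r : ℝ) (y : Y) (g h : SL2) : g * h ∈ Ev a r y ↔ g ∈ Ev a (r + lg h y) (ac h y) := by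
  unfold Ev
  change lg (g * h) y + r ∈ Set.Icc 0 a ↔ lg g (ac h y) + (r + lg h y) ∈ Set.Icc 0 a
  rw [lg_mul]
  have : lg g (ac h y) + lg h y + r = lg g (ac h y) + (r + lg h y) := by ring
  rw [this]

lemma M_Ev_add {μ : Measure SL2} [IsProbabilityMeasure μ] (n k : ℕ) (a r : ℝ) (y : Y) :
    M μ (n + k) (Ev a r y) = ∫⁻ h, M μ n (Ev a (r + lg h y) (ac h y)) ∂(M μ k) := by
  rw [← lintegral_indicator_one (meas_Ev a r y), lint_add' μ n k (measurable_one.indicator (meas_Ev a r y))]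
  apply lintegral_congr; intro h
  rw [← lintegral_indicator_one (meas_Ev _ _ _)]
  apply lintegral_congr; intro g
  by_cases hg : g ∈ Ev a (r + lg h y) (ac h y)
  · rw [Set.indicator_of_mem hg, Set.indicator_of_mem ((Ev_mul a r y g h).2 hg)]; rfl
  · rw [Set.indicator_of_notMem hg, Set.indicator_of_notMem (fun h' => hg ((Ev_mul a r y g h).1 h'))]

lemma renewal_fin {μ : Measure SL2} [IsProbabilityMeasure μ] (a : ℝ) (β : ENNReal)
    (hβ : ∀ r ∈ Set.Icc 0 a, ∀ y : Y, ∑' n, M μ n (Ev a r y) ≤ β) (N : ℕ) :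
    ∀ r y, ∑ n ∈ Finset.range N, M μ n (Ev a r y) ≤ β := by
  induction N with
  | zero => intro r y; simp
  | succ N ih =>
    intro r y
    by_cases hr : r ∈ Set.Icc 0 a
    · exact (ENNReal.sum_le_tsum _).trans (hβ r hr y)
    · rw [Finset.sum_range_succ']
      have h0 : M μ 0 (Ev a r y) = 0 := by
        rw [M, Measure.dirac_apply' _ (meas_Ev _ _ _), Set.indicator_of_notMem]
        intro h
        have h' : lg 1 y + r ∈ Set.Icc 0 a := h
        have : lg 1 y = 0 := by
          have := lg_mul 1 1 y
          rw [ac_one, mul_one] at this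
          linarith
        rw [this, zero_add] at h'
        exact hr h'
      rw [h0, add_zero]
      simp only [M_Ev_add]
      have hmeas : ∀ n, Measurable fun h => M μ n (Ev a (r + lg h y) (ac h y)) := by
        intro n
        have h1 : MeasurableSet {p : SL2 × SL2 | p.2 * p.1 ∈ Ev a r y} :=
          (meas_Ev a r y).preimage (measurable_snd.mul measurable_fst)
        have h2 := measurable_measure_prodMk_left (ν := M μ n) h1
        convert h2 using 2 with h
        congr 1
        ext g
        exact (Ev_mul a r y g h).symm
      rw [← lintegral_finsetSum _ (fun n _ => hmeas n)]
      calc _ ≤ ∫⁻ h, β ∂(M μ 1) := lintegral_mono fun h => ih _ _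
        _ = β := by simp

theorem renewal_bound {μ : Measure SL2} [IsProbabilityMeasure μ] {δ C ρ : ℝ} (hc : Contr μ δ C ρ) :
    ∃ B : ℝ, 0 < B ∧ ∀ (a : ℝ), 0 ≤ a → ∀ (r : ℝ) (y : Y), ∑' n, M μ n (Ev a r y) ≤ ENNReal.ofReal (B * (1 + a)) := by
  obtain ⟨B, hB, h⟩ := geo_min hc.1 hc.2.2.1 hc.2.2.2.1 hc.2.2.2.2.1
  refine ⟨B, hB, fun a ha r y => ?_⟩
  have h1 := renewal_fin (μ := μ) a (ENNReal.ofReal (B * (1 + a))) (by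
    intro r hr y
    apply h a ha
    · intro n; exact prob_le_one
    · intro n
      refine le_trans (measure_mono ?_) (low_dev hc n y a)
      intro g hg
      have h1 : lg g y + r ∈ Set.Icc 0 a := hg
      change lg g y ≤ a
      linarith [h1.2, hr.1])
  rw [ENNReal.tsum_eq_iSup_nat]
  exact iSup_le fun N => h1 N r y


lemma high_dev {μ : Measure SL2} [IsProbabilityMeasure μ] {ε A : ℝ} (hm : Mom μ ε A) (n : ℕ) (y : Y) (a t : ℝ) :
    M μ n (Ev a (-t) y) ≤ ENNReal.ofReal (A ^ (n + 1) * Real.exp (-(ε * t))) := by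
  obtain ⟨hε, hA, hmo⟩ := hm
  have h1 := markov_gen (M μ n) (meas_Ev a (-t) y) (meas_nf_rpow ε) (ENNReal.ofReal (Real.exp (-(ε * t)))) (by
      intro g hg
      have hg' : lg g y + -t ∈ Set.Icc 0 a := hg
      have h2 := (abs_le.1 (abs_lg_le g y)).2
      rw [Real.rpow_def_of_pos (nf_pos g), ← ENNReal.ofReal_mul (Real.exp_pos _).le, ← Real.exp_add]
      apply ENNReal.one_le_ofReal.2
      apply Real.one_le_exp
      nlinarith [hg'.1])
  refine h1.trans ?_
  rw [mul_comm (A ^ (n + 1)), ENNReal.ofReal_mul (Real.exp_pos _).le]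
  gcongr
  exact hmo n

lemma low_dev_inv {μ : Measure SL2} [IsProbabilityMeasure μ] {δ C ρ : ℝ} (hc : Contr (μ.map (·⁻¹)) δ C ρ)
    (n : ℕ) (y : Y) (b : ℝ) :
    M μ n {g | lg g⁻¹ y ≤ b} ≤ ENNReal.ofReal (C * ρ ^ n * Real.exp (δ * b)) := by
  have hcc := contr_inv hc n y
  obtain ⟨hδ0, hδ1, hC1, hρ0, hρ1, hcon⟩ := hc
  have hm1 : Measurable fun g : SL2 => ep δ y g⁻¹ := (meas_ep δ y).comp measurable_inv
  have hm2 : Measurable fun g : SL2 => lg g⁻¹ y := (cont_lgl y).measurable.comp measurable_inv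
  have h1 := markov_gen (M μ n) (S := {g | lg g⁻¹ y ≤ b}) (measurableSet_le hm2 measurable_const)
    hm1 (ENNReal.ofReal (Real.exp (δ * b))) (by
      intro g hg
      have hg' : lg g⁻¹ y ≤ b := hg
      rw [ep_eq_exp, ← ENNReal.ofReal_mul (Real.exp_pos _).le, ← Real.exp_add]
      apply ENNReal.one_le_ofReal.2
      apply Real.one_le_exp
      nlinarith)
  refine h1.trans ?_
  rw [mul_comm (C * ρ ^ n), ENNReal.ofReal_mul (Real.exp_pos _).le]
  gcongr

/-- distance between two images under the same contracting element -/
lemma dt_ac_le (h : SL2) (z z' : Y) (b : ℝ) (h1 : b < lg h z) (h2 : b < lg h z') :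
    |dt (ac h z) (ac h z')| ≤ Real.exp (-(2 * b)) := by
  have p1 := mv_pos h z
  have p2 := mv_pos h z'
  have e1 : Real.exp b ≤ enorm2 (mv h z) := by
    rw [← Real.exp_log p1]; exact Real.exp_le_exp.2 h1.le
  have e2 : Real.exp b ≤ enorm2 (mv h z') := by
    rw [← Real.exp_log p2]; exact Real.exp_le_exp.2 h2.le
  have h3 := abs_dt_le z z'
  rw [z.2, z'.2, mul_one] at h3
  have e : |dt (ac h z) (ac h z')| = |dt z z'| / (enorm2 (mv h z) * enorm2 (mv h z')) := by
    rw [ac, ac, dt_smul_left, dt_smul_right, dt_mv, abs_mul, abs_mul, abs_of_pos (inv_pos.2 p1),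
      abs_of_pos (inv_pos.2 p2)]
    field_simp
  rw [e, div_le_iff₀ (by positivity)]
  have e3 : Real.exp (-(2 * b)) * (Real.exp b * Real.exp b) = 1 := by
    rw [← Real.exp_add, ← Real.exp_add]; simp; ring
  have e4 : Real.exp b * Real.exp b ≤ enorm2 (mv h z) * enorm2 (mv h z') :=
    mul_le_mul e1 e2 (Real.exp_pos _).le p1.le
  nlinarith [mul_le_mul_of_nonneg_left e4 (Real.exp_pos (-(2 * b))).le]

/-- the joint event -/
def Ej (s a t : ℝ) (y u w : Y) : Set SL2 := {g | |dt (ac g⁻¹ u) w| ≤ Real.exp (-s)} ∩ Ev a (-t) y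

lemma cont_acinv1 (u : Y) : Continuous fun g : SL2 => ac g⁻¹ u :=
  Continuous.comp (f := fun g : SL2 => (g, u)) (g := fun p : SL2 × Y => ac p.1⁻¹ p.2) cont_acinv
    (Continuous.prodMk continuous_id continuous_const)

lemma cont_dtinv (u w : Y) : Continuous fun g : SL2 => |dt (ac g⁻¹ u) w| :=
  (Continuous.comp (f := fun g : SL2 => (ac g⁻¹ u, w)) (g := fun p : Y × Y => dt p.1 p.2) cont_dtYY
    (Continuous.prodMk (cont_acinv1 u) continuous_const)).abs

lemma meas_dtinv (u w : Y) (D : ℝ) : MeasurableSet {g : SL2 | |dt (ac g⁻¹ u) w| ≤ D} :=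
  measurableSet_le (cont_dtinv u w).measurable measurable_const

lemma meas_Ej (s a t : ℝ) (y u w : Y) : MeasurableSet (Ej s a t y u w) :=
  (meas_dtinv u w _).inter (meas_Ev a (-t) y)

/-- the bad event for the last letters -/
def Bd (b : ℝ) (z : Y) : Set SL2 := {h | lg h⁻¹ z ≤ b}

lemma cont_lginv : Continuous fun p : SL2 × Y => lg p.1⁻¹ p.2 :=
  Continuous.comp (f := fun p : SL2 × Y => (p.1⁻¹, p.2)) (g := fun p : SL2 × Y => lg p.1 p.2) cont_lg
    (Continuous.prodMk (continuous_fst.inv) continuous_snd)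

lemma meas_Bd (b : ℝ) (z : Y) : MeasurableSet (Bd b z) :=
  measurableSet_le ((cont_lgl z).measurable.comp measurable_inv) measurable_const

lemma meas_Bd2 (b : ℝ) (u : Y) : MeasurableSet {p : SL2 × SL2 | p.2 ∈ Bd b (ac p.1⁻¹ u)} := by
  have h1 : Continuous fun p : SL2 × SL2 => (p.2, ac p.1⁻¹ u) :=
    Continuous.prodMk continuous_snd (Continuous.comp (f := fun p : SL2 × SL2 => p.1) (g := fun g : SL2 => ac g⁻¹ u)
      (cont_acinv1 u) continuous_fst)
  have h2 : Continuous fun p : SL2 × SL2 => lg p.2⁻¹ (ac p.1⁻¹ u) :=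
    Continuous.comp (f := fun p : SL2 × SL2 => (p.2, ac p.1⁻¹ u)) (g := fun p : SL2 × Y => lg p.1⁻¹ p.2) cont_lginv h1
  exact measurableSet_le h2.measurable measurable_const

lemma Ej_sub (s a t b : ℝ) (y u w y0 : Y) (g h : SL2) (hE : g * h ∈ Ej s a t y u w)
    (h1 : h ∉ Bd b (ac g⁻¹ u)) (h2 : h ∉ Bd b y0) :
    |dt (ac h⁻¹ y0) w| ≤ Real.exp (-s) + Real.exp (-(2 * b)) := by
  have hE1 : |dt (ac (g * h)⁻¹ u) w| ≤ Real.exp (-s) := hE.1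
  have h1' : ¬ lg h⁻¹ (ac g⁻¹ u) ≤ b := h1
  have h2' : ¬ lg h⁻¹ y0 ≤ b := h2
  rw [mul_inv_rev, ac_mul] at hE1
  have h3 := dt_ac_le h⁻¹ y0 (ac g⁻¹ u) b (not_le.1 h2') (not_le.1 h1')
  have h4 := dt_triangle (ac h⁻¹ y0) (ac h⁻¹ (ac g⁻¹ u)) w (ac h⁻¹ y0).2 (ac h⁻¹ (ac g⁻¹ u)).2 w.2
  linarith

lemma Ej_split {μ : Measure SL2} [IsProbabilityMeasure μ] (s a t b : ℝ) (y u w y0 : Y) (k m : ℕ) (β : ENNReal)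
    (hβ : ∀ z, M μ m (Bd b z) ≤ β) :
    M μ (k + m) (Ej s a t y u w) ≤ 2 * β + ∫⁻ h in {h | |dt (ac h⁻¹ y0) w| ≤ Real.exp (-s) + Real.exp (-(2 * b))},
      M μ k (Ev a (-t + lg h y) (ac h y)) ∂(M μ m) := by
  obtain ⟨S, hS⟩ : ∃ S : Set SL2, S = {h | |dt (ac h⁻¹ y0) w| ≤ Real.exp (-s) + Real.exp (-(2 * b))} := ⟨_, rfl⟩
  have hSm : MeasurableSet S := by rw [hS]; exact meas_dtinv _ _ _
  rw [← hS]
  have hprod : M μ (k + m) (Ej s a t y u w) = ((M μ k).prod (M μ m)) {p | p.1 * p.2 ∈ Ej s a t y u w} := by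
    rw [M_add, Measure.mconv, Measure.map_apply measurable_mul (meas_Ej _ _ _ _ _ _)]
    rfl
  have hsub : {p : SL2 × SL2 | p.1 * p.2 ∈ Ej s a t y u w} ⊆
      ({p : SL2 × SL2 | p.2 ∈ Bd b (ac p.1⁻¹ u)} ∪ (Set.univ ×ˢ Bd b y0)) ∪
        {p : SL2 × SL2 | p.2 ∈ S ∧ p.1 * p.2 ∈ Ev a (-t) y} := by
    rintro ⟨g, h⟩ hp
    have hp' : g * h ∈ Ej s a t y u w := hp
    by_cases h1 : h ∈ Bd b (ac g⁻¹ u)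
    · exact Or.inl (Or.inl h1)
    by_cases h2 : h ∈ Bd b y0
    · exact Or.inl (Or.inr ⟨trivial, h2⟩)
    · refine Or.inr ⟨?_, hp'.2⟩
      rw [hS]
      exact Ej_sub s a t b y u w y0 g h hp' h1 h2
  rw [hprod]
  refine (measure_mono hsub).trans ((measure_union_le _ _).trans (add_le_add ((measure_union_le _ _).trans ?_) ?_))
  · rw [two_mul]
    refine add_le_add ?_ ?_
    · rw [Measure.prod_apply (meas_Bd2 b u)]
      calc _ ≤ ∫⁻ g, β ∂(M μ k) := lintegral_mono fun g => hβ (ac g⁻¹ u)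
        _ = β := by simp
    · rw [Measure.prod_prod, measure_univ, one_mul]
      exact hβ y0
  · have hm3 : MeasurableSet {p : SL2 × SL2 | p.2 ∈ S ∧ p.1 * p.2 ∈ Ev a (-t) y} :=
      (hSm.preimage measurable_snd).inter ((meas_Ev a (-t) y).preimage measurable_mul)
    rw [Measure.prod_apply_symm hm3, ← lintegral_indicator hSm]
    apply lintegral_mono
    intro h
    beta_reduce
    by_cases hh : h ∈ S
    · rw [Set.indicator_of_mem hh]
      apply measure_mono
      intro g hg
      have hg' : h ∈ S ∧ g * h ∈ Ev a (-t) y := hg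
      exact (Ev_mul a (-t) y g h).1 hg'.2
    · rw [Set.indicator_of_notMem hh]
      have : ((fun g => (g, h)) ⁻¹' {p : SL2 × SL2 | p.2 ∈ S ∧ p.1 * p.2 ∈ Ev a (-t) y}) = ∅ := by
        ext g
        refine ⟨fun hg => ?_, fun hg => hg.elim⟩
        have hg' : h ∈ S ∧ g * h ∈ Ev a (-t) y := hg
        exact hh hg'.1
      rw [this]; simp

lemma Ej_mid {μ : Measure SL2} [IsProbabilityMeasure μ] (s a t b : ℝ) (y u w y0 : Y) (m L : ℕ) (β R Q : ENNReal)
    (hβ : ∀ z, M μ m (Bd b z) ≤ β) (hR : ∀ r y, ∑' n, M μ n (Ev a r y) ≤ R)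
    (hQ : M μ m {h | |dt (ac h⁻¹ y0) w| ≤ Real.exp (-s) + Real.exp (-(2 * b))} ≤ Q) :
    ∑ k ∈ Finset.range L, M μ (k + m) (Ej s a t y u w) ≤ L * (2 * β) + R * Q := by
  have hmeas : ∀ n, Measurable fun h => M μ n (Ev a (-t + lg h y) (ac h y)) := by
    intro n
    have h1 : MeasurableSet {p : SL2 × SL2 | p.2 * p.1 ∈ Ev a (-t) y} :=
      (meas_Ev a (-t) y).preimage (measurable_snd.mul measurable_fst)
    have h2 := measurable_measure_prodMk_left (ν := M μ n) h1
    convert h2 using 2 with h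
    congr 1
    ext g
    exact (Ev_mul a (-t) y g h).symm
  refine (Finset.sum_le_sum fun k _ => Ej_split s a t b y u w y0 k m β hβ).trans ?_
  rw [Finset.sum_add_distrib]
  refine add_le_add (by simp) ?_
  rw [← lintegral_finsetSum _ (fun n _ => hmeas n)]
  refine (lintegral_mono (g := fun _ => R) fun h => ?_).trans ?_
  · exact (ENNReal.sum_le_tsum _).trans (hR _ _)
  · rw [setLIntegral_const]
    gcongr

lemma reg_markov {μ : Measure SL2} [IsProbabilityMeasure μ] {ε K : ℝ} (hε : 0 < ε) (m : ℕ) (y0 w : Y)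
    (hK : ∫⁻ g, Ph ε (ac g⁻¹ y0) w ∂(M μ m) ≤ ENNReal.ofReal K) {D : ℝ} (hD : 0 < D) :
    M μ m {h | |dt (ac h⁻¹ y0) w| ≤ D} ≤ ENNReal.ofReal (D ^ ε * K) := by
  rw [ENNReal.ofReal_mul (by positivity)]
  refine (markov_gen (M μ m) (meas_dtinv y0 w D) (meas_Bker1 ε y0 w) (ENNReal.ofReal (D ^ ε)) ?_).trans (by gcongr)
  intro h hh
  have hh' : |dt (ac h⁻¹ y0) w| ≤ D := hh
  unfold Ph
  rw [ENNReal.rpow_neg, ← ENNReal.ofReal_rpow_of_pos hD, ← div_eq_mul_inv]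
  have hne : (ENNReal.ofReal D) ^ ε ≠ 0 := by
    rw [ENNReal.ofReal_rpow_of_pos hD]
    exact (ENNReal.ofReal_pos.2 (by positivity)).ne'
  have h1 : (ENNReal.ofReal |dt (ac h⁻¹ y0) w|) ^ ε ≤ (ENNReal.ofReal D) ^ ε :=
    ENNReal.rpow_le_rpow (ENNReal.ofReal_le_ofReal hh') hε.le
  rw [ENNReal.le_div_iff_mul_le (Or.inr hne) (Or.inl (ENNReal.rpow_ne_top_of_nonneg hε.le ENNReal.ofReal_ne_top)), one_mul]
  exact h1


lemma num_absorb {θ t s : ℝ} (hθ : 0 < θ) (hs : 0 < s) (ht : 10 * s < t) :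
    (1 + t) * Real.exp (-(θ * t)) ≤ (1 + 2 / θ) * Real.exp (-(θ * s)) := by
  have ht0 : 0 < t := by linarith
  have h1 := Real.add_one_le_exp (θ * t / 2)
  have h2 : 1 + t ≤ (1 + 2 / θ) * Real.exp (θ * t / 2) := by
    have h3 : (1 + 2 / θ) * (θ * t / 2 + 1) = 1 + t + (θ * t / 2 + 2 / θ) := by field_simp; ring
    have h4 : 0 < θ * t / 2 + 2 / θ := by positivity
    have h5 : 0 < 1 + 2 / θ := by positivity
    nlinarith [mul_le_mul_of_nonneg_left h1 h5.le]
  calc (1 + t) * Real.exp (-(θ * t)) ≤ (1 + 2 / θ) * Real.exp (θ * t / 2) * Real.exp (-(θ * t)) :=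
        mul_le_mul_of_nonneg_right h2 (Real.exp_pos _).le
    _ = (1 + 2 / θ) * Real.exp (θ * t / 2 + -(θ * t)) := by rw [mul_assoc, ← Real.exp_add]
    _ ≤ _ := by
      apply mul_le_mul_of_nonneg_left _ (by positivity)
      apply Real.exp_le_exp.2
      nlinarith

lemma sum_small {μ : Measure SL2} [IsProbabilityMeasure μ] {ε A : ℝ} (hm : Mom μ ε A) (m : ℕ) (s a t : ℝ) (y u w : Y) :
    ∑ n ∈ Finset.range m, M μ n (Ej s a t y u w) ≤ ENNReal.ofReal (m * (A ^ m * Real.exp (-(ε * t)))) := by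
  calc ∑ n ∈ Finset.range m, M μ n (Ej s a t y u w)
      ≤ ∑ n ∈ Finset.range m, ENNReal.ofReal (A ^ m * Real.exp (-(ε * t))) := by
        apply Finset.sum_le_sum
        intro n hn
        refine (measure_mono Set.inter_subset_right).trans ((high_dev hm n y a t).trans ?_)
        apply ENNReal.ofReal_le_ofReal
        apply mul_le_mul_of_nonneg_right _ (Real.exp_pos _).le
        exact pow_le_pow_right₀ hm.2.1 (Finset.mem_range.1 hn)
    _ = _ := by
        rw [Finset.sum_const, Finset.card_range, nsmul_eq_mul, ENNReal.ofReal_mul (p := (m : ℝ)) (by positivity), ENNReal.ofReal_natCast]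

lemma sum_large {μ : Measure SL2} [IsProbabilityMeasure μ] {δ C ρ : ℝ} (hc : Contr μ δ C ρ) (m L : ℕ) (s a t : ℝ) (y u w : Y) :
    ∑' k, M μ (k + L + m) (Ej s a t y u w) ≤
      ENNReal.ofReal (C * ρ ^ L * Real.exp (δ * (t + a)) / (1 - ρ)) := by
  have hld := low_dev hc
  obtain ⟨hδ0, hδ1, hC1, hρ0, hρ1, hcon⟩ := hc
  rw [← geo_tail hρ0 hρ1 (by positivity)]
  apply ENNReal.tsum_le_tsum
  intro k
  refine (measure_mono ?_).trans ((hld (k + L + m) y (t + a)).trans ?_)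
  · intro g hg
    have h1 : lg g y + -t ∈ Set.Icc 0 a := hg.2
    change lg g y ≤ t + a
    linarith [h1.2]
  · apply ENNReal.ofReal_le_ofReal
    have h1 : ρ ^ m ≤ 1 := pow_le_one₀ hρ0.le hρ1.le
    have h2 : 0 ≤ C * ρ ^ L * Real.exp (δ * (t + a)) * ρ ^ k := by positivity
    calc C * ρ ^ (k + L + m) * Real.exp (δ * (t + a))
        = C * ρ ^ L * Real.exp (δ * (t + a)) * ρ ^ k * ρ ^ m := by ring
      _ ≤ _ := mul_le_of_le_one_right h2 h1

lemma pow_eq_exp {ρ : ℝ} (h0 : 0 < ρ) (n : ℕ) : ρ ^ n = Real.exp (n * Real.log ρ) := by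
  rw [mul_comm, Real.exp_mul, Real.exp_log h0, Real.rpow_natCast]

lemma num_T1 {ε0 A η θ W X t s : ℝ} {m : ℕ} (hA : 1 ≤ A) (hlA : 0 ≤ Real.log A) (hη0 : 0 < η) (hηA : η * Real.log A ≤ ε0 / 2) (hθ1 : θ ≤ ε0 / 2) (ht2 : 10 < t) (hW0 : 0 < W) (hm2 : (m : ℝ) ≤ η * t + 1) (hexX : Real.exp (-(θ * s)) ≤ X) (habs : (1 + t) * Real.exp (-(θ * t)) ≤ W * Real.exp (-(θ * s))) :
    (m : ℝ) * (A ^ m * Real.exp (-(ε0 * t))) ≤ (η + 1) * A * W * X := by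
  have e1 : A ^ m * Real.exp (-(ε0 * t)) ≤ A * Real.exp (-(θ * t)) := by
    have hAe : A = Real.exp (Real.log A) := (Real.exp_log (by linarith)).symm
    rw [pow_eq_exp (by linarith)]
    nth_rewrite 2 [hAe]
    rw [← Real.exp_add, ← Real.exp_add]
    apply Real.exp_le_exp.2
    have h1 := mul_le_mul_of_nonneg_right hm2 hlA
    have h2 := mul_le_mul_of_nonneg_right hηA (by linarith : 0 ≤ t)
    have h3 := mul_le_mul_of_nonneg_right hθ1 (by linarith : 0 ≤ t)
    nlinarith
  have e2 : (m : ℝ) ≤ (η + 1) * (1 + t) := by nlinarith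
  calc (m : ℝ) * (A ^ m * Real.exp (-(ε0 * t))) ≤ ((η + 1) * (1 + t)) * (A * Real.exp (-(θ * t))) :=
        mul_le_mul e2 e1 (by positivity) (by positivity)
    _ = (η + 1) * A * ((1 + t) * Real.exp (-(θ * t))) := by ring
    _ ≤ (η + 1) * A * (W * X) := by
        apply mul_le_mul_of_nonneg_left _ (by positivity)
        exact habs.trans (mul_le_mul_of_nonneg_left hexX hW0.le)
    _ = _ := by ring

lemma num_T3 {C ρ δ κ θ X t s a : ℝ} {L : ℕ} (hC1 : 1 ≤ C) (hρ0 : 0 < ρ) (h1ρ : 0 < 1 - ρ) (hl : 0 < -Real.log ρ) (hκ1 : κ * (-Real.log ρ) = 1 + δ) (hθ2 : θ ≤ 1) (hs : 0 < s) (ha : 0 < a) (ht1 : 10 * s < t) (hL1 : κ * (t + a) ≤ L) (hexX : Real.exp (-(θ * s)) ≤ X) :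
    C * ρ ^ L * Real.exp (δ * (t + a)) / (1 - ρ) ≤ C / (1 - ρ) * X := by
  have e1 : ρ ^ L * Real.exp (δ * (t + a)) ≤ X := by
    refine le_trans ?_ hexX
    rw [pow_eq_exp hρ0, ← Real.exp_add]
    apply Real.exp_le_exp.2
    have h1 := mul_le_mul_of_nonneg_right hL1 hl.le
    have h2 : κ * (t + a) * (-Real.log ρ) = (1 + δ) * (t + a) := by rw [← hκ1]; ring
    nlinarith
  calc C * ρ ^ L * Real.exp (δ * (t + a)) / (1 - ρ) = C / (1 - ρ) * (ρ ^ L * Real.exp (δ * (t + a))) := by ring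
    _ ≤ _ := mul_le_mul_of_nonneg_left e1 (by positivity)

lemma num_beta {C' ρ' δ' γ η θ t b β : ℝ} {m : ℕ} (hC1' : 1 ≤ C') (hρ0' : 0 < ρ') (hδ0' : 0 < δ') (hγ0 : 0 < γ) (hγ1 : δ' * γ = -Real.log ρ' / 2) (hb : b = γ * m) (hβd : β = C' * ρ' ^ m * Real.exp (δ' * b)) (hm1 : η * t ≤ m) (hθ3 : θ ≤ δ' * γ * η) (ht2 : 10 < t) :
    β ≤ C' * Real.exp (-(θ * t)) := by
  rw [hβd, pow_eq_exp hρ0', mul_assoc, ← Real.exp_add]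
  apply mul_le_mul_of_nonneg_left _ (by linarith)
  apply Real.exp_le_exp.2
  have h1 : (m : ℝ) * Real.log ρ' + δ' * b = -(δ' * γ * m) := by
    rw [hb]
    have : Real.log ρ' = -(2 * (δ' * γ)) := by rw [hγ1]; ring
    rw [this]; ring
  rw [h1]
  have h2 := mul_le_mul_of_nonneg_left hm1 (by positivity : 0 ≤ δ' * γ)
  have h3 := mul_le_mul_of_nonneg_right hθ3 (by linarith : 0 ≤ t)
  nlinarith

lemma num_T2 {C' κ θ t s a β W X : ℝ} {L : ℕ} (hC1' : 1 ≤ C') (hκ0 : 0 < κ) (hW0 : 0 < W) (hβ0 : 0 < β) (ha : 0 < a) (ht2 : 10 < t) (hL2 : (L : ℝ) ≤ κ * (t + a) + 1) (hβ : β ≤ C' * Real.exp (-(θ * t))) (hexX1 : (1 + a) * Real.exp (-(θ * s)) ≤ X) (habs : (1 + t) * Real.exp (-(θ * t)) ≤ W * Real.exp (-(θ * s))) :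
    (L : ℝ) * (2 * β) ≤ 2 * (κ + 1) * C' * W * X := by
  have e2 : (L : ℝ) ≤ (κ + 1) * ((1 + t) * (1 + a)) := by nlinarith [mul_pos (by linarith : 0 < t) ha]
  calc (L : ℝ) * (2 * β) ≤ ((κ + 1) * ((1 + t) * (1 + a))) * (2 * (C' * Real.exp (-(θ * t)))) :=
        mul_le_mul e2 (by linarith) (by positivity) (by positivity)
    _ = 2 * (κ + 1) * C' * ((1 + a) * ((1 + t) * Real.exp (-(θ * t)))) := by ring
    _ ≤ 2 * (κ + 1) * C' * ((1 + a) * (W * Real.exp (-(θ * s)))) := by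
        apply mul_le_mul_of_nonneg_left _ (by positivity)
        exact mul_le_mul_of_nonneg_left habs (by linarith)
    _ = 2 * (κ + 1) * C' * W * ((1 + a) * Real.exp (-(θ * s))) := by ring
    _ ≤ _ := mul_le_mul_of_nonneg_left hexX1 (by positivity)

lemma num_D {D c δ γ η θ t s b : ℝ} {m : ℕ} (hδ0 : 0 < δ) (hδ1 : δ ≤ 1) (hγ0 : 0 < γ) (hη0 : 0 < η) (hs : 0 < s) (ht1 : 10 * s < t) (hc1 : c ≤ 1) (hc2 : c ≤ 20 * γ * η) (hb : b = γ * m) (hm1 : η * t ≤ m) (hθ4 : θ ≤ c * (δ / 2)) (hD : D = Real.exp (-s) + Real.exp (-(2 * b))) (hD0 : 0 < D) :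
    D ^ (δ / 2) ≤ 2 * Real.exp (-(θ * s)) := by
  have e1 : D ≤ 2 * Real.exp (-(c * s)) := by
    have f1 : Real.exp (-s) ≤ Real.exp (-(c * s)) := Real.exp_le_exp.2 (by nlinarith)
    have f2 : Real.exp (-(2 * b)) ≤ Real.exp (-(c * s)) := by
      apply Real.exp_le_exp.2
      rw [hb]
      have h1 := mul_le_mul_of_nonneg_left hm1 hγ0.le
      have h2 := mul_le_mul_of_nonneg_right hc2 hs.le
      have h3 := mul_le_mul_of_nonneg_left ht1.le (by positivity : 0 ≤ γ * η)
      nlinarith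
    rw [hD]; linarith
  calc D ^ (δ / 2) ≤ (2 * Real.exp (-(c * s))) ^ (δ / 2) := Real.rpow_le_rpow hD0.le e1 (by linarith)
    _ = 2 ^ (δ / 2) * Real.exp (-(c * s) * (δ / 2)) := by
        rw [Real.mul_rpow (by norm_num) (Real.exp_pos _).le, ← Real.exp_mul]
    _ ≤ 2 * Real.exp (-(θ * s)) := by
        apply mul_le_mul _ _ (Real.exp_pos _).le (by norm_num)
        · calc (2 : ℝ) ^ (δ / 2) ≤ 2 ^ (1 : ℝ) := Real.rpow_le_rpow_of_exponent_le (by norm_num) (by linarith)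
            _ = 2 := Real.rpow_one 2
        · apply Real.exp_le_exp.2
          have := mul_le_mul_of_nonneg_right hθ4 hs.le
          nlinarith

lemma num_T4 {B K D δ θ s a X : ℝ} (hB0 : 0 < B) (hK0 : 0 ≤ K) (ha : 0 < a) (hDs : D ^ (δ / 2) ≤ 2 * Real.exp (-(θ * s))) (hexX1 : (1 + a) * Real.exp (-(θ * s)) ≤ X) :
    B * (1 + a) * (D ^ (δ / 2) * K) ≤ 2 * B * K * X := by
  calc B * (1 + a) * (D ^ (δ / 2) * K) ≤ B * (1 + a) * ((2 * Real.exp (-(θ * s))) * K) := by gcongr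
    _ = 2 * B * K * ((1 + a) * Real.exp (-(θ * s))) := by ring
    _ ≤ _ := mul_le_mul_of_nonneg_left hexX1 (by positivity)

set_option maxHeartbeats 1000000 in
theorem core_bound (μ : Measure SL2) [IsProbabilityMeasure μ] (hmom : HasExpMoment μ) (hzd : ZariskiDense μ) :
    ∃ C > (0 : ℝ), ∃ ε' > (0 : ℝ), ∀ (s a t : ℝ) (y u w : Y), 0 < s → 0 < a → max (10 * s) 10 < t →
      ∑' n : ℕ, M μ n (Ej s a t y u w) ≤ ENNReal.ofReal (C * (1 + a) ^ 2 * Real.exp (-(ε' * s))) := by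
  obtain ⟨ε0, A, hm⟩ := exists_Mom μ hmom
  obtain ⟨δ, C, ρ, hδε, hc⟩ := exists_contr hzd hm
  have ipm : IsProbabilityMeasure (μ.map (·⁻¹)) := Measure.isProbabilityMeasure_map measurable_inv.aemeasurable
  obtain ⟨δ', C', ρ', hδε', hc'⟩ := exists_contr (zd_inv hzd) (mom_inv hm)
  obtain ⟨K, hK0, hreg⟩ := exists_regular hm hδε hc
  obtain ⟨B, hB0, hren⟩ := renewal_bound hc
  have hbad := low_dev_inv hc'
  have hsm := fun m s a t y u w => sum_small hm m s a t y u w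
  have hlg := fun m L s a t y u w => sum_large hc m L s a t y u w
  obtain ⟨hε0, hA, -⟩ := hm
  obtain ⟨hδ0, hδ1, hC1, hρ0, hρ1, -⟩ := hc
  obtain ⟨hδ0', hδ1', hC1', hρ0', hρ1', -⟩ := hc'
  have hlA : 0 ≤ Real.log A := Real.log_nonneg hA
  have hl : 0 < -Real.log ρ := by have := Real.log_neg hρ0 hρ1; linarith
  have hl' : 0 < -Real.log ρ' := by have := Real.log_neg hρ0' hρ1'; linarith
  obtain ⟨η, hη⟩ : ∃ η, η = ε0 / (2 * (1 + Real.log A)) := ⟨_, rfl⟩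
  have hη0 : 0 < η := by rw [hη]; positivity
  have hηA : η * Real.log A ≤ ε0 / 2 := by
    have : η * (1 + Real.log A) = ε0 / 2 := by rw [hη]; field_simp
    rw [mul_add] at this
    linarith
  obtain ⟨γ, hγ⟩ : ∃ γ, γ = -Real.log ρ' / (2 * δ') := ⟨_, rfl⟩
  have hγ0 : 0 < γ := by rw [hγ]; positivity
  have hγ1 : δ' * γ = -Real.log ρ' / 2 := by rw [hγ]; field_simp
  obtain ⟨κ, hκ⟩ : ∃ κ, κ = (1 + δ) / (-Real.log ρ) := ⟨_, rfl⟩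
  have hκ0 : 0 < κ := by rw [hκ]; positivity
  have hκ1 : κ * (-Real.log ρ) = 1 + δ := by rw [hκ]; exact div_mul_cancel₀ _ hl.ne'
  obtain ⟨c, hcd⟩ : ∃ c, c = min 1 (20 * γ * η) := ⟨_, rfl⟩
  have hc0 : 0 < c := by rw [hcd]; positivity
  have hc1 : c ≤ 1 := by rw [hcd]; exact min_le_left _ _
  have hc2 : c ≤ 20 * γ * η := by rw [hcd]; exact min_le_right _ _
  obtain ⟨θ, hθd⟩ : ∃ θ, θ = min (min (ε0 / 2) 1) (min (δ' * γ * η) (c * (δ / 2))) := ⟨_, rfl⟩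
  have hθ0 : 0 < θ := by rw [hθd]; positivity
  have hθ1 : θ ≤ ε0 / 2 := by rw [hθd]; exact (min_le_left _ _).trans (min_le_left _ _)
  have hθ2 : θ ≤ 1 := by rw [hθd]; exact (min_le_left _ _).trans (min_le_right _ _)
  have hθ3 : θ ≤ δ' * γ * η := by rw [hθd]; exact (min_le_right _ _).trans (min_le_left _ _)
  have hθ4 : θ ≤ c * (δ / 2) := by rw [hθd]; exact (min_le_right _ _).trans (min_le_right _ _)
  obtain ⟨W, hW⟩ : ∃ W, W = 1 + 2 / θ := ⟨_, rfl⟩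
  have hW0 : 0 < W := by rw [hW]; positivity
  have h1ρ : 0 < 1 - ρ := by linarith
  refine ⟨(η + 1) * A * W + C / (1 - ρ) + 2 * (κ + 1) * C' * W + 2 * B * K, by positivity, θ, hθ0, ?_⟩
  intro s a t y u w hs ha ht
  have ht1 : 10 * s < t := (le_max_left _ _).trans_lt ht
  have ht2 : 10 < t := (le_max_right _ _).trans_lt ht
  obtain ⟨X, hX⟩ : ∃ X, X = (1 + a) ^ 2 * Real.exp (-(θ * s)) := ⟨_, rfl⟩
  have hX0 : 0 < X := by rw [hX]; positivity
  have hex0 := Real.exp_pos (-(θ * s))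
  have ha2 : 1 + a ≤ (1 + a) ^ 2 := le_self_pow₀ (by linarith) two_ne_zero
  have ha3 : 1 ≤ (1 + a) ^ 2 := by linarith
  have hexX : Real.exp (-(θ * s)) ≤ X := by rw [hX]; exact le_mul_of_one_le_left hex0.le ha3
  have hexX1 : (1 + a) * Real.exp (-(θ * s)) ≤ X := by rw [hX]; exact mul_le_mul_of_nonneg_right ha2 hex0.le
  have habs := num_absorb hθ0 hs ht1
  rw [← hW] at habs
  obtain ⟨m, hmd⟩ : ∃ m, m = ⌈η * t⌉₊ := ⟨_, rfl⟩
  have hηt : 0 ≤ η * t := by positivity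
  have hm1 : η * t ≤ m := by rw [hmd]; exact Nat.le_ceil _
  have hm2 : (m : ℝ) ≤ η * t + 1 := by rw [hmd]; exact (Nat.ceil_lt_add_one hηt).le
  obtain ⟨L, hLd⟩ : ∃ L, L = ⌈κ * (t + a)⌉₊ := ⟨_, rfl⟩
  have hκt : 0 ≤ κ * (t + a) := by positivity
  have hL1 : κ * (t + a) ≤ L := by rw [hLd]; exact Nat.le_ceil _
  have hL2 : (L : ℝ) ≤ κ * (t + a) + 1 := by rw [hLd]; exact (Nat.ceil_lt_add_one hκt).le
  -- first block
  have T1 : (m : ℝ) * (A ^ m * Real.exp (-(ε0 * t))) ≤ (η + 1) * A * W * X := num_T1 hA hlA hη0 hηA hθ1 ht2 hW0 hm2 hexX habs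
  -- last block
  have T3 : C * ρ ^ L * Real.exp (δ * (t + a)) / (1 - ρ) ≤ C / (1 - ρ) * X := num_T3 hC1 hρ0 h1ρ hl hκ1 hθ2 hs ha ht1 hL1 hexX
  -- middle block
  obtain ⟨b, hb⟩ : ∃ b, b = γ * m := ⟨_, rfl⟩
  obtain ⟨β, hβd⟩ : ∃ β, β = C' * ρ' ^ m * Real.exp (δ' * b) := ⟨_, rfl⟩
  have hβ0 : 0 < β := by rw [hβd]; positivity
  have hβ : β ≤ C' * Real.exp (-(θ * t)) := num_beta hC1' hρ0' hδ0' hγ0 hγ1 hb hβd hm1 hθ3 ht2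
  have T2 : (L : ℝ) * (2 * β) ≤ 2 * (κ + 1) * C' * W * X := num_T2 hC1' hκ0 hW0 hβ0 ha ht2 hL2 hβ hexX1 habs
  obtain ⟨D, hD⟩ : ∃ D, D = Real.exp (-s) + Real.exp (-(2 * b)) := ⟨_, rfl⟩
  have hD0 : 0 < D := by rw [hD]; positivity
  have hDs : D ^ (δ / 2) ≤ 2 * Real.exp (-(θ * s)) := num_D hδ0 hδ1 hγ0 hη0 hs ht1 hc1 hc2 hb hm1 hθ4 hD hD0
  have T4 : B * (1 + a) * (D ^ (δ / 2) * K) ≤ 2 * B * K * X := num_T4 hB0 hK0 ha hDs hexX1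
  obtain ⟨y0, hy0⟩ := hreg m w
  have hQ := reg_markov (by linarith : 0 < δ / 2) m y0 w hy0 hD0
  rw [hD] at hQ
  have hmid := Ej_mid s a t b y u w y0 m L (ENNReal.ofReal β) (ENNReal.ofReal (B * (1 + a))) _
    (fun z => by rw [hβd]; exact hbad m z b) (fun r y => hren a ha.le r y) hQ
  rw [← hD] at hmid
  rw [← ENNReal.summable.sum_add_tsum_nat_add' (f := fun n => M μ n (Ej s a t y u w)) (k := m),
    ← ENNReal.summable.sum_add_tsum_nat_add' (f := fun n => M μ (n + m) (Ej s a t y u w)) (k := L)]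
  have hmid' : ∑ k ∈ Finset.range L, M μ (k + m) (Ej s a t y u w) ≤
      ENNReal.ofReal (2 * (κ + 1) * C' * W * X + 2 * B * K * X) := by
    refine hmid.trans ?_
    have e : (L : ENNReal) * (2 * ENNReal.ofReal β) = ENNReal.ofReal (L * (2 * β)) := by
      rw [ENNReal.ofReal_mul (by positivity), ENNReal.ofReal_mul (by norm_num), ENNReal.ofReal_natCast,
        ENNReal.ofReal_ofNat]
    rw [e, ← ENNReal.ofReal_mul (by positivity), ← ENNReal.ofReal_add (by positivity) (by positivity)]
    exact ENNReal.ofReal_le_ofReal (add_le_add T2 T4)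
  have hs1 := (hsm m s a t y u w).trans (ENNReal.ofReal_le_ofReal T1)
  have hs3 := (hlg m L s a t y u w).trans (ENNReal.ofReal_le_ofReal T3)
  refine (add_le_add hs1 (add_le_add hmid' hs3)).trans ?_
  rw [← ENNReal.ofReal_add (by positivity) (by positivity), ← ENNReal.ofReal_add (by positivity) (by positivity)]
  apply ENNReal.ofReal_le_ofReal
  rw [hX]
  apply le_of_eq
  ring


/-- unit representative of a projective point -/
def yOf (x : PX) : Y := ⟨(enorm2 x.rep)⁻¹ • x.rep, unit_normalize x.rep_nonzero⟩

lemma cocycle_eq (g : SL2) (x : PX) : cocycle g x = lg g (yOf x) := by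
  have h := enorm2_pos x.rep_nonzero
  unfold cocycle lg yOf
  change Real.log (enorm2 (mv g x.rep) / enorm2 x.rep) = Real.log (enorm2 (mv g ((enorm2 x.rep)⁻¹ • x.rep)))
  rw [mv_smul, enorm2_smul, abs_of_pos (inv_pos.2 h), div_eq_inv_mul]

lemma act_rep (g : SL2) (x : PX) : ∃ c : ℝ, c ≠ 0 ∧ (act g x).rep = c • mv g x.rep := by
  have hne := mv_ne_zero g x.rep_nonzero
  have h1 : act g x = Projectivization.mk ℝ (mv g x.rep) hne := by
    conv_lhs => rw [← x.mk_rep]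
    unfold act
    rw [Projectivization.map_mk]
    rfl
  obtain ⟨c, hc⟩ := Projectivization.exists_smul_eq_mk_rep ℝ (mv g x.rep) hne
  refine ⟨c, c.ne_zero, ?_⟩
  rw [h1, ← hc]
  rfl

lemma projDist_eq (g : SL2) (xo x' : PX) : projDist (act g xo) x' = |dt (ac g (yOf xo)) (yOf x')| := by
  obtain ⟨c, hc0, hc⟩ := act_rep g xo
  have h1 := enorm2_pos xo.rep_nonzero
  have h2 := enorm2_pos x'.rep_nonzero
  have h3 := enorm2_pos (mv_ne_zero g xo.rep_nonzero)
  have hca := abs_pos.2 hc0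
  have e1 : projDist (act g xo) x' = |dt (act g xo).rep x'.rep| / (enorm2 (act g xo).rep * enorm2 x'.rep) := rfl
  rw [e1, hc, dt_smul_left, abs_mul, enorm2_smul]
  have e2 : |dt (ac g (yOf xo)) (yOf x')| = |dt (mv g xo.rep) x'.rep| / (enorm2 (mv g xo.rep) * enorm2 x'.rep) := by
    change |dt ((enorm2 (mv g ((enorm2 xo.rep)⁻¹ • xo.rep)))⁻¹ • mv g ((enorm2 xo.rep)⁻¹ • xo.rep))
      ((enorm2 x'.rep)⁻¹ • x'.rep)| = _
    rw [mv_smul, enorm2_smul, dt_smul_left, dt_smul_left, dt_smul_right, abs_mul, abs_mul, abs_mul,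
      abs_of_pos (inv_pos.2 h1), abs_of_pos (inv_pos.2 h2), abs_of_pos (inv_pos.2 (mul_pos (inv_pos.2 h1) h3))]
    field_simp
  rw [e2]
  field_simp

theorem renewal_independence_backward
    (μ : Measure SL2) [IsProbabilityMeasure μ]
    (hmom : HasExpMoment μ) (hzd : ZariskiDense μ) :
    ∃ C > (0 : ℝ), ∃ ε' > (0 : ℝ), ∀ (s a t : ℝ) (x x' xo : PX),
      0 < s → 0 < a → max (10 * s) 10 < t →
      (∑' n : ℕ, μpi μ n {g | projDist (act (word g)⁻¹ xo) x' ≤ Real.exp (-s) ∧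
          cocycle (word g) x - t ∈ Set.Icc 0 a}) ≤
        ENNReal.ofReal (C * (1 + a) ^ 2 * Real.exp (-(ε' * s))) := by
  obtain ⟨C, hC, ε', hε', h⟩ := core_bound μ hmom hzd
  refine ⟨C, hC, ε', hε', fun s a t x x' xo hs ha ht => ?_⟩
  refine le_trans (le_of_eq ?_) (h s a t (yOf x) (yOf xo) (yOf x') hs ha ht)
  apply tsum_congr
  intro n
  rw [← map_word, Measure.map_apply (measurable_word n) (meas_Ej _ _ _ _ _ _)]
  congr 1
  ext g
  change (projDist (act (word g)⁻¹ xo) x' ≤ Real.exp (-s) ∧ cocycle (word g) x - t ∈ Set.Icc 0 a) ↔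
    (|dt (ac (word g)⁻¹ (yOf xo)) (yOf x')| ≤ Real.exp (-s) ∧ lg (word g) (yOf x) + -t ∈ Set.Icc 0 a)
  rw [projDist_eq, cocycle_eq, sub_eq_add_neg]

end
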